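/- Let n ≥ 1, let α_1, …, α_n be nonzero algebraic complex numbers, and let λ_1, …, λ_n be complex numbers with e^{λ_j} = α_j for each j. Assume λ_1, …, λ_n are linearly independent over ℚ. Then the numbers 1, λ_1, …, λ_n are linearly independent over the field of algebraic numbers; that is, there are no algebraic numbers β_0, β_1, …, β_n, not all zero, with β_0 + β_1 λ_1 + ⋯ + β_n λ_n = 0. -/

import Mathlib

namespace BK

lemma factor_one (k : ℕ) : ∀ (f : ℂ → ℂ) (s : ℂ), Differentiable ℂ f → (k : ℕ∞) ≤ analyticOrderAt f s →
    ∃ h : ℂ → ℂ, Differentiable ℂ h ∧ ∀ z, f z = (z - s) ^ k * h z := by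
  induction k with
  | zero => intro f s hf _; exact ⟨f, hf, by simp⟩
  | succ k ih =>
    intro f s hf ho
    have hfa : AnalyticAt ℂ f s := hf.analyticAt s
    have hfs : f s = 0 := by
      have := (natCast_le_analyticOrderAt_iff_iteratedDeriv_eq_zero hfa).1 ho 0 (by omega)
      simpa using this
    have hd : Differentiable ℂ (dslope f s) := by
      have := (Complex.differentiableOn_dslope (s := Set.univ) (c := s) (f := f) Filter.univ_mem).2
        hf.differentiableOn
      exact differentiableOn_univ.1 this
    have hmul : f = (fun z => z - s) * dslope f s := by
      funext z
      have := sub_smul_dslope f s z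
      simp only [smul_eq_mul, hfs, sub_zero] at this
      simp [this]
    have ha : AnalyticAt ℂ (fun z : ℂ => z - s) s := by fun_prop
    have h1 : analyticOrderAt (fun z : ℂ => z - s) s = 1 := by
      have := (ha.analyticOrderAt_eq_natCast (n := 1)).2 ⟨fun _ => 1, analyticAt_const, one_ne_zero, by simp⟩
      simpa using this
    rw [hmul, analyticOrderAt_mul ha (hd.analyticAt s), h1] at ho
    have ho' : (k : ℕ∞) ≤ analyticOrderAt (dslope f s) s := by
      rw [Nat.cast_succ, add_comm] at ho
      exact (ENat.add_le_add_iff_left (by simp)).1 ho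
    obtain ⟨h, hh, he⟩ := ih _ s hd ho'
    refine ⟨h, hh, fun z => ?_⟩
    have : f z = (z - s) * dslope f s z := congrFun hmul z
    rw [this, he]; ring

lemma factor_many (k : ℕ) (f : ℂ → ℂ) (hf : Differentiable ℂ f) (P : Finset ℂ) :
    (∀ s ∈ P, (k : ℕ∞) ≤ analyticOrderAt f s) →
    ∃ h : ℂ → ℂ, Differentiable ℂ h ∧ ∀ z, f z = (∏ s ∈ P, (z - s) ^ k) * h z := by
  classical
  induction P using Finset.induction_on with
  | empty => intro _; exact ⟨f, hf, by simp⟩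
  | insert a P ha ih =>
    intro H
    obtain ⟨h, hh, he⟩ := ih (fun s hs => H s (Finset.mem_insert_of_mem hs))
    have hpa : AnalyticAt ℂ (fun z : ℂ => ∏ s ∈ P, (z - s) ^ k) a := by fun_prop
    have h0 : analyticOrderAt (fun z : ℂ => ∏ s ∈ P, (z - s) ^ k) a = 0 := by
      rw [hpa.analyticOrderAt_eq_zero]
      refine Finset.prod_ne_zero_iff.2 fun s hs => pow_ne_zero _ (sub_ne_zero.2 ?_)
      rintro rfl; exact ha hs
    have hfe : f = (fun z : ℂ => ∏ s ∈ P, (z - s) ^ k) * h := funext he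
    have := H a (Finset.mem_insert_self _ _)
    rw [hfe, analyticOrderAt_mul hpa (hh.analyticAt a), h0, zero_add] at this
    obtain ⟨h', hh', he'⟩ := factor_one k h a hh this
    refine ⟨h', hh', fun z => ?_⟩
    rw [he, he', Finset.prod_insert ha]; ring

/-- One-variable Schwarz lemma. -/
lemma schwarz (f : ℂ → ℂ) (hf : Differentiable ℂ f) (S k : ℕ) (R M : ℝ) (hR : 2 * (S : ℝ) + 2 ≤ R)
    (h0 : ∀ s < S, ∀ i < k, iteratedDeriv i f (s : ℂ) = 0)
    (hM : ∀ z : ℂ, ‖z‖ ≤ R → ‖f z‖ ≤ M) (s : ℕ) (hs : s < S) :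
    ‖iteratedDeriv k f (s : ℂ)‖ ≤ k.factorial * ((2 * ((S : ℝ) + 1)) ^ (S * k) * M / R ^ (S * k)) := by
  classical
  have hS0 : (0 : ℝ) ≤ S := Nat.cast_nonneg S
  have hR0 : 0 < R := by linarith
  have hM0 : 0 ≤ M := (norm_nonneg _).trans (hM 0 (by simpa using hR0.le))
  set P : Finset ℂ := (Finset.range S).image (fun n : ℕ => (n : ℂ)) with hP
  have hcard : P.card = S := by
    rw [hP, Finset.card_image_of_injective _ Nat.cast_injective, Finset.card_range]
  obtain ⟨h, hh, he⟩ := factor_many k f hf P (by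
    intro t ht
    obtain ⟨m, hm, rfl⟩ := Finset.mem_image.1 ht
    exact (natCast_le_analyticOrderAt_iff_iteratedDeriv_eq_zero (hf.analyticAt _)).2
      (h0 m (Finset.mem_range.1 hm)))
  have hPn : ∀ t ∈ P, ‖t‖ ≤ S := by
    intro t ht
    obtain ⟨m, hm, rfl⟩ := Finset.mem_image.1 ht
    simpa using (Finset.mem_range.1 hm).le
  have hb : ∀ z : ℂ, ‖z‖ ≤ R → ‖h z‖ ≤ M / (R / 2) ^ (S * k) := by
    intro z hz
    refine Complex.norm_le_of_forall_mem_frontier_norm_le (U := Metric.ball 0 R) Metric.isBounded_ball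
      hh.diffContOnCl ?_ (by rw [closure_ball _ hR0.ne']; simpa using hz)
    intro w hw
    rw [frontier_ball _ hR0.ne'] at hw
    have hw' : ‖w‖ = R := by simpa using hw
    have hp : (R / 2) ^ (S * k) ≤ ‖∏ t ∈ P, (w - t) ^ k‖ := by
      rw [norm_prod, mul_comm, pow_mul, ← hcard, ← Finset.prod_const]
      refine Finset.prod_le_prod (fun _ _ => by positivity) fun t ht => ?_
      rw [norm_pow]
      refine pow_le_pow_left₀ (by positivity) ?_ _
      have := norm_sub_norm_le w t
      have := hPn t ht
      linarith
    have hpos : 0 < (R / 2) ^ (S * k) := by positivity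
    rw [le_div_iff₀ hpos]
    have h1 := hM w hw'.le
    rw [he w, norm_mul] at h1
    calc ‖h w‖ * (R / 2) ^ (S * k) ≤ ‖h w‖ * ‖∏ t ∈ P, (w - t) ^ k‖ := by gcongr
      _ ≤ M := by rw [mul_comm]; exact h1
  have hs' : (s : ℝ) + 1 ≤ S := by exact_mod_cast hs
  have := Complex.norm_iteratedDeriv_le_of_forall_mem_sphere_norm_le (c := (s : ℂ)) (R := 1) k
    one_pos (hf.diffContOnCl) (C := (2 * ((S : ℝ) + 1)) ^ (S * k) * M / R ^ (S * k)) (by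
    intro z hz
    have hz1 : ‖z - s‖ = 1 := by simpa [dist_eq_norm] using hz
    have hzn : ‖z‖ ≤ S := by
      have := norm_add_le (z - s) (s : ℂ)
      simp only [sub_add_cancel, hz1, Complex.norm_natCast] at this
      linarith
    rw [he z, norm_mul]
    have hp : ‖∏ t ∈ P, (z - t) ^ k‖ ≤ ((S : ℝ) + 1) ^ (S * k) := by
      rw [norm_prod, mul_comm, pow_mul, ← hcard, ← Finset.prod_const]
      refine Finset.prod_le_prod (fun _ _ => by positivity) fun t ht => ?_
      rw [norm_pow]
      refine pow_le_pow_left₀ (by positivity) ?_ _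
      obtain ⟨m, hm, rfl⟩ := Finset.mem_image.1 ht
      have hm := Finset.mem_range.1 hm
      have h2 : ‖(s : ℂ) - m‖ ≤ S := by
        rw [show (s : ℂ) - m = ((s - m : ℤ) : ℂ) by push_cast; ring, Complex.norm_intCast]
        have : |(s : ℤ) - m| ≤ S := by rw [abs_le]; omega
        exact_mod_cast this
      have h3 := norm_add_le (z - s) ((s : ℂ) - m)
      rw [sub_add_sub_cancel, hz1] at h3
      rw [hcard]; linarith
    calc _ ≤ ((S : ℝ) + 1) ^ (S * k) * (M / (R / 2) ^ (S * k)) := by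
          gcongr
          exact hb z (by linarith)
      _ = _ := by rw [div_pow, mul_pow]; field_simp)
  simpa using this

end BK


namespace BK
open Polynomial

section alg
variable {R : Type*} [CommRing R] {B : Type*}

/-- Formal directional derivative on exponential polynomials. -/
noncomputable def Dop (w : B → R) (m : R) : (B → R[X]) →ₗ[R] (B → R[X]) where
  toFun p b := C (w b) * p b + C m * derivative (p b)
  map_add' p q := by funext b; simp; ring
  map_smul' c p := by funext b; simp [smul_eq_C_mul]; ring

lemma Dop_apply (w : B → R) (m : R) (p : B → R[X]) (b : B) :
    Dop w m p b = C (w b) * p b + C m * derivative (p b) := rfl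

lemma Dop_comm (w w' : B → R) (m m' : R) (p : B → R[X]) :
    Dop w m (Dop w' m' p) = Dop w' m' (Dop w m p) := by
  funext b; simp [Dop_apply]; ring

lemma Dop_sum {τ : Type*} [Fintype τ] (w : τ → B → R) (m : τ → R) (c : τ → R) (p : B → R[X]) :
    Dop (fun b => ∑ i, c i * w i b) (∑ i, c i * m i) p = ∑ i, c i • Dop (w i) (m i) p := by
  funext b
  simp only [Dop_apply, Finset.sum_apply, Pi.smul_apply, smul_eq_C_mul, map_sum, map_mul,
    Finset.sum_mul, mul_add, Finset.sum_add_distrib, mul_assoc]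

/-- Composition along a list. -/
def Dl {P : Type*} [AddCommMonoid P] [Module R P] {ι : Type*} (A : ι → P →ₗ[R] P) :
    List ι → P →ₗ[R] P
  | [] => LinearMap.id
  | i :: l => (Dl A l).comp (A i)

lemma Dl_cons {P : Type*} [AddCommMonoid P] [Module R P] {ι : Type*} (A : ι → P →ₗ[R] P) (i : ι)
    (l : List ι) (p : P) : Dl A (i :: l) p = Dl A l (A i p) := rfl

lemma Dl_nil {P : Type*} [AddCommMonoid P] [Module R P] {ι : Type*} (A : ι → P →ₗ[R] P)
    (p : P) : Dl A [] p = p := rfl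

lemma Dl_append {P : Type*} [AddCommMonoid P] [Module R P] {ι : Type*} (A : ι → P →ₗ[R] P)
    (l l' : List ι) (p : P) : Dl A (l ++ l') p = Dl A l' (Dl A l p) := by
  induction l generalizing p with
  | nil => rfl
  | cons i l ih => simp [Dl_cons, ih]

lemma Dl_replicate {P : Type*} [AddCommMonoid P] [Module R P] {ι : Type*} (A : ι → P →ₗ[R] P)
    (i : ι) (k : ℕ) (p : P) : Dl A (List.replicate k i) p = (A i)^[k] p := by
  induction k generalizing p with
  | zero => rfl
  | succ k ih => simp [List.replicate_succ, Dl_cons, ih]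

lemma Dl_perm {P : Type*} [AddCommMonoid P] [Module R P] {ι : Type*} (A : ι → P →ₗ[R] P)
    (hA : ∀ i j p, A i (A j p) = A j (A i p)) {l l' : List ι} (h : l.Perm l') (p : P) :
    Dl A l p = Dl A l' p := by
  induction h generalizing p with
  | nil => rfl
  | cons x _ ih => simp [Dl_cons, ih]
  | swap x y l => simp [Dl_cons, hA x y]
  | trans _ _ ih1 ih2 => rw [ih1, ih2]

/-- Evaluation functional. -/
noncomputable def Ev [Fintype B] (r : R) (e : B → R) : (B → R[X]) →ₗ[R] R where
  toFun q := ∑ b, (q b).eval r * e b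
  map_add' p q := by simp [add_mul, Finset.sum_add_distrib]
  map_smul' c p := by simp [Finset.mul_sum, mul_assoc]

lemma Ev_apply [Fintype B] (r : R) (e : B → R) (q : B → R[X]) :
    Ev r e q = ∑ b, (q b).eval r * e b := rfl

lemma map_Ev {R' : Type*} [CommRing R'] (ψ : R →+* R') [Fintype B] (r : R) (e : B → R) (q : B → R[X]) :
    ψ (Ev r e q) = Ev (ψ r) (fun b => ψ (e b)) (fun b => (q b).map ψ) := by
  simp [Ev_apply, eval_map, eval₂_at_apply]

lemma map_Dl {R' : Type*} [CommRing R'] (ψ : R →+* R') {τ : Type*} (w : τ → B → R) (m : τ → R)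
    (l : List τ) (q : B → R[X]) :
    (fun b => (Dl (fun i => Dop (w i) (m i)) l q b).map ψ) =
      Dl (fun i => Dop (fun b => ψ (w i b)) (ψ (m i))) l (fun b => (q b).map ψ) := by
  induction l generalizing q with
  | nil => rfl
  | cons i l ih =>
    rw [Dl_cons, Dl_cons, ih]
    congr 1
    funext b
    simp [Dop_apply, Polynomial.map_add, Polynomial.map_mul, derivative_map]

end alg

lemma transfer {P : Type*} [AddCommGroup P] [Module ℂ P] {ι τ : Type*} [Fintype ι]
    (A : ι → P →ₗ[ℂ] P) (A' : τ → P →ₗ[ℂ] P) (c : τ → ι → ℂ)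
    (hc : ∀ σ p, A' σ p = ∑ j, c σ j • A j p) (Cb : ℝ) (hCb : ∀ σ, ∑ j, ‖c σ j‖ ≤ Cb) (hCb0 : 0 ≤ Cb)
    (Λ : P →ₗ[ℂ] ℂ) (ε : ℝ) (hε : 0 ≤ ε) (n : ℕ) (p : P)
    (h : ∀ l : List ι, l.length = n → ‖Λ (Dl A l p)‖ ≤ ε) :
    ∀ l : List τ, l.length = n → ‖Λ (Dl A' l p)‖ ≤ Cb ^ n * ε := by
  induction n generalizing p with
  | zero =>
    intro l hl
    obtain rfl := List.length_eq_zero_iff.1 hl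
    simpa [Dl_nil] using h [] rfl
  | succ n ih =>
    intro l hl
    cases l with
    | nil => simp at hl
    | cons σ l =>
      have hl' : l.length = n := by simpa using hl
      rw [Dl_cons, hc, map_sum, map_sum]
      calc _ ≤ ∑ j, ‖c σ j‖ * (Cb ^ n * ε) := by
            refine norm_sum_le_of_le _ fun j _ => ?_
            rw [map_smul, map_smul, norm_smul]
            gcongr
            refine ih (A j p) (fun l hl => ?_) l hl'
            rw [← Dl_cons]
            exact h _ (by simp [hl])
        _ ≤ Cb * (Cb ^ n * ε) := by
            rw [← Finset.sum_mul]
            gcongr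
            exact hCb σ
        _ = _ := by ring

/-- Coefficient bound. -/
def Bd (A : ℕ) (M : ℝ) (q : ℂ[X]) : Prop := ∀ a, ‖q.coeff a‖ ≤ M ∧ (A ≤ a → q.coeff a = 0)

lemma Bd.step {A : ℕ} {M W m' : ℝ} {q : ℂ[X]} (hq : Bd A M q) {w m : ℂ} (hw : ‖w‖ ≤ W) (hm : ‖m‖ ≤ m')
    (hM : 0 ≤ M) :
    Bd A ((W + m' * A) * M) (C w * q + C m * derivative q) := by
  have hm' : 0 ≤ m' := (norm_nonneg _).trans hm
  have hW : 0 ≤ W := (norm_nonneg _).trans hw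
  intro a
  simp only [coeff_add, coeff_C_mul, coeff_derivative]
  constructor
  · have h1 : ‖q.coeff (a + 1) * ((a : ℂ) + 1)‖ ≤ M * A := by
      by_cases h : A ≤ a + 1
      · rw [(hq (a+1)).2 h]; simp; positivity
      · rw [norm_mul]
        gcongr
        · exact (hq _).1
        · rw [show (a : ℂ) + 1 = ((a + 1 : ℕ) : ℂ) by push_cast; ring, Complex.norm_natCast]
          exact_mod_cast (not_le.1 h).le
    calc _ ≤ ‖w‖ * ‖q.coeff a‖ + ‖m‖ * ‖q.coeff (a + 1) * ((a : ℂ) + 1)‖ := by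
          refine (norm_add_le _ _).trans ?_
          rw [norm_mul, norm_mul]
      _ ≤ W * M + m' * (M * A) := by
          gcongr
          exact (hq a).1
      _ = _ := by ring
  · intro h
    rw [(hq a).2 h, (hq (a + 1)).2 (by omega)]; simp

lemma Bd.list {B τ : Type*} {A : ℕ} {M W m' : ℝ} {q : B → ℂ[X]} {w : τ → B → ℂ} {m : τ → ℂ}
    (hw : ∀ i b, ‖w i b‖ ≤ W) (hm : ∀ i, ‖m i‖ ≤ m') (hM : 0 ≤ M) (hW : 0 ≤ W) (hm' : 0 ≤ m')
    (hq : ∀ b, Bd A M (q b)) (l : List τ) (b : B) :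
    Bd A ((W + m' * A) ^ l.length * M) (Dl (fun i => Dop (w i) (m i)) l q b) := by
  induction l generalizing q M with
  | nil => simpa [Dl_nil] using hq b
  | cons i l ih =>
    rw [Dl_cons, List.length_cons, pow_succ, mul_assoc]
    refine ih (by positivity) fun b => ?_
    exact (hq b).step (hw i b) (hm i) hM

lemma Bd.eval {A : ℕ} {M ρ : ℝ} {q : ℂ[X]} (hq : Bd A M q) (hρ : 1 ≤ ρ) {r : ℂ} (hr : ‖r‖ ≤ ρ) :
    ‖q.eval r‖ ≤ A * M * ρ ^ A := by
  have hdeg : q.natDegree < A ∨ q = 0 := by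
    by_cases h : q = 0
    · exact .inr h
    · left
      by_contra hh
      exact h (leadingCoeff_eq_zero.1 ((hq _).2 (not_lt.1 hh)))
  have hM : 0 ≤ M := (norm_nonneg _).trans (hq 0).1
  rcases hdeg with hdeg | rfl
  · rw [eval_eq_sum_range' hdeg]
    refine le_trans (norm_sum_le_of_le (n := fun _ => M * ρ ^ A) _ fun a ha => ?_) (by simp [mul_assoc])
    rw [norm_mul, norm_pow]
    gcongr
    · exact (hq a).1
    · calc ‖r‖ ^ a ≤ ρ ^ a := by gcongr
        _ ≤ ρ ^ A := pow_le_pow_right₀ hρ (Finset.mem_range.1 ha).le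
  · simp; positivity

lemma Ev_bound {B : Type*} [Fintype B] {A : ℕ} {M ρ E : ℝ} {q : B → ℂ[X]} (hq : ∀ b, Bd A M (q b))
    (hρ : 1 ≤ ρ) {r : ℂ} (hr : ‖r‖ ≤ ρ) {e : B → ℂ} (he : ∀ b, ‖e b‖ ≤ E) (hM : 0 ≤ M) :
    ‖Ev r e q‖ ≤ Fintype.card B * (A * M * ρ ^ A * E) := by
  rw [Ev_apply]
  refine le_trans (norm_sum_le_of_le (n := fun _ => A * M * ρ ^ A * E) _ fun b _ => ?_) (by simp)
  rw [norm_mul]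
  gcongr
  · exact (hq b).eval hρ hr
  · exact he b

lemma hasDeriv_line {B : Type*} [Fintype B] (w : B → ℂ) (m : ℂ) (r0 : ℂ) (θ : B → ℂ) (q : B → ℂ[X]) (u : ℂ) :
    HasDerivAt (fun u : ℂ => Ev (r0 + u * m) (fun b => Complex.exp (θ b + u * w b)) q)
      (Ev (r0 + u * m) (fun b => Complex.exp (θ b + u * w b)) (Dop w m q)) u := by
  simp only [Ev_apply]
  refine HasDerivAt.fun_sum fun b _ => ?_
  have h1 : HasDerivAt (fun u : ℂ => r0 + u * m) m u := by
    simpa using ((hasDerivAt_id u).mul_const m).const_add r0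
  have h2 : HasDerivAt (fun u : ℂ => θ b + u * w b) (w b) u := by
    simpa using ((hasDerivAt_id u).mul_const (w b)).const_add (θ b)
  have h3 := ((q b).hasDerivAt (r0 + u * m)).comp u h1
  refine HasDerivAt.congr_deriv (h3.mul h2.cexp) ?_
  simp [Dop_apply]; ring

lemma iter_line {B : Type*} [Fintype B] (w : B → ℂ) (m : ℂ) (r0 : ℂ) (θ : B → ℂ) (q : B → ℂ[X]) (k : ℕ) :
    iteratedDeriv k (fun u : ℂ => Ev (r0 + u * m) (fun b => Complex.exp (θ b + u * w b)) q) =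
     (fun u : ℂ => Ev (r0 + u * m) (fun b => Complex.exp (θ b + u * w b)) ((Dop w m)^[k] q)) := by
  induction k with
  | zero => simp
  | succ k ih =>
    rw [iteratedDeriv_succ, ih]
    funext u
    rw [(hasDeriv_line w m r0 θ _ u).deriv, Function.iterate_succ_apply']

lemma line_bound {B : Type*} [Fintype B] (w : B → ℂ) (m : ℂ) (r0 : ℂ) (θ : B → ℂ) (q : B → ℂ[X])
    {A : ℕ} {M ρ Θ : ℝ} (hq : ∀ b, Bd A M (q b)) (hM : 0 ≤ M)
    (S k : ℕ) (R : ℝ) (hR : 2 * (S : ℝ) + 2 ≤ R)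
    (hρ : 1 ≤ ρ) (hr : ‖r0‖ + R * ‖m‖ ≤ ρ) (hΘ : ∀ b, ‖θ b‖ + R * ‖w b‖ ≤ Θ)
    (h0 : ∀ s < S, ∀ i < k, Ev (r0 + (s : ℂ) * m) (fun b => Complex.exp (θ b + (s : ℂ) * w b)) ((Dop w m)^[i] q) = 0)
    (s : ℕ) (hs : s < S) :
    ‖Ev (r0 + (s : ℂ) * m) (fun b => Complex.exp (θ b + (s : ℂ) * w b)) ((Dop w m)^[k] q)‖ ≤
      k.factorial * ((2 * ((S : ℝ) + 1)) ^ (S * k) *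
        (Fintype.card B * (A * M * ρ ^ A * Real.exp Θ)) / R ^ (S * k)) := by
  have := schwarz (fun u : ℂ => Ev (r0 + u * m) (fun b => Complex.exp (θ b + u * w b)) q)
    (fun u => (hasDeriv_line w m r0 θ q u).differentiableAt) S k R
    (Fintype.card B * (A * M * ρ ^ A * Real.exp Θ)) hR ?_ ?_ s hs
  · rwa [iter_line] at this
  · intro s hs i hi
    rw [iter_line]
    exact h0 s hs i hi
  · intro z hz
    refine Ev_bound hq hρ ?_ ?_ hM
    · refine (norm_add_le _ _).trans (le_trans ?_ hr)
      rw [norm_mul]; gcongr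
    · intro b
      rw [Complex.norm_exp]
      refine Real.exp_le_exp.2 ((Complex.re_le_norm _).trans ?_)
      refine (norm_add_le _ _).trans (le_trans ?_ (hΘ b))
      rw [norm_mul]; gcongr

/-- complexity measure -/
noncomputable def ms (p : ℂ[X]) : ℕ := open Classical in if p = 0 then 0 else p.natDegree + 1

lemma ms_le (p : ℂ[X]) (a m : ℂ) : ms (C a * p + C m * derivative p) ≤ ms p := by
  unfold ms
  by_cases hp : p = 0
  · simp [hp]
  · rw [if_neg hp]
    split_ifs
    · omega
    · have h1 : (C a * p).natDegree ≤ p.natDegree := natDegree_C_mul_le _ _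
      have h2 : (C m * derivative p).natDegree ≤ p.natDegree :=
        (natDegree_C_mul_le _ _).trans ((natDegree_derivative_le _).trans (by omega))
      have := natDegree_add_le_of_degree_le h1 h2
      omega

lemma ms_lt (p : ℂ[X]) (hp : p ≠ 0) (m : ℂ) : ms (C m * derivative p) < ms p := by
  unfold ms
  rw [if_neg hp]
  split_ifs with h
  · omega
  · have h2 : (C m * derivative p).natDegree ≤ (derivative p).natDegree := natDegree_C_mul_le _ _
    have h3 : p.natDegree ≠ 0 := by
      intro h0
      apply h
      rw [natDegree_eq_zero.1 h0 |>.choose_spec.symm]; simp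
    have := natDegree_derivative_lt h3
    omega

lemma ne_zero_of (p : ℂ[X]) (hp : p ≠ 0) (a m : ℂ) (ha : a ≠ 0) : C a * p + C m * derivative p ≠ 0 := by
  intro h
  have h1 := congrArg (fun q => q.coeff p.natDegree) h
  simp only [coeff_add, coeff_C_mul, coeff_derivative, coeff_zero] at h1
  rw [coeff_eq_zero_of_natDegree_lt (Nat.lt_succ_self _)] at h1
  simp only [zero_mul, mul_zero, add_zero, mul_eq_zero, ha, false_or] at h1
  exact hp (leadingCoeff_eq_zero.1 h1)

lemma nonvanish {B : Type*} [Fintype B] (w : B → ℂ) (hw : Function.Injective w) (m : ℂ) (hm : m ≠ 0)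
    (r : ℂ) (e : B → ℂ) (he : ∀ b, e b ≠ 0) (N : ℕ) : ∀ (q : B → ℂ[X]), ∑ b, ms (q b) ≤ N →
    (∀ n, Ev r e ((Dop w m)^[n] q) = 0) → q = 0 := by
  classical
  induction N with
  | zero =>
    intro q hq _
    funext b
    have := (Finset.sum_eq_zero_iff.1 (Nat.le_zero.1 hq)) b (Finset.mem_univ b)
    by_contra h
    simp only [Pi.zero_apply] at h
    simp [ms, h] at this
  | succ N ih =>
    intro q hq hv
    by_contra hq0
    -- the operator `D - w b1`
    have key : ∀ b1, q b1 ≠ 0 → Dop (fun b => w b - w b1) m q = 0 := by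
      intro b1 hb1
      apply ih
      · have : ∑ b, ms (Dop (fun b => w b - w b1) m q b) < ∑ b, ms (q b) := by
          refine Finset.sum_lt_sum (fun b _ => ms_le _ _ _) ⟨b1, Finset.mem_univ _, ?_⟩
          have := ms_lt (q b1) hb1 m
          simpa [Dop_apply] using this
        omega
      · intro n
        have h1 : Dop (fun b => w b - w b1) m q = Dop w m q - w b1 • q := by
          funext b; simp [Dop_apply, smul_eq_C_mul]; ring
        have h2 : (Dop w m)^[n] (Dop w m q - w b1 • q)
            = (Dop w m)^[n+1] q - w b1 • (Dop w m)^[n] q := by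
          simp only [← Module.End.coe_pow, map_sub, map_smul, pow_succ]
          rfl
        rw [h1, h2, map_sub, map_smul, hv, hv]; simp
    obtain ⟨b0, hb0⟩ : ∃ b, q b ≠ 0 := by
      by_contra! h; exact hq0 (funext h)
    have honly : ∀ b, b ≠ b0 → q b = 0 := by
      intro b hb
      by_contra hbq
      have := congrFun (key b hbq) b0
      refine ne_zero_of (q b0) hb0 (w b0 - w b) m (sub_ne_zero.2 fun h => hb (hw h).symm) ?_
      simpa [Dop_apply] using this
    have hder : derivative (q b0) = 0 := by
      have := congrFun (key b0 hb0) b0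
      simpa [Dop_apply, hm] using this
    have hconst := derivative_eq_zero.1 hder
    rw [eq_C_of_natDegree_eq_zero hconst] at hb0
    have hc : (q b0).coeff 0 ≠ 0 := by
      intro h; rw [h] at hb0; simp at hb0
    have := hv 0
    simp only [Function.iterate_zero, id_eq, Ev_apply] at this
    rw [Finset.sum_eq_single b0 (fun b _ hb => by rw [honly b hb]; simp) (by simp),
      eq_C_of_natDegree_eq_zero hconst, eval_C] at this
    exact (mul_ne_zero hc (he b0)) this

end BK


namespace BK
open Polynomial NumberField

lemma house_le_iff {K : Type} [Field K] [NumberField K] (a : K) (M : ℝ) :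
    house a ≤ M ↔ ∀ ψ : K →+* ℂ, ‖ψ a‖ ≤ M := by
  rw [house, pi_norm_le_iff_of_nonempty]
  rfl

lemma siegel0 (K : Type) [Field K] [NumberField K] : ∃ c : ℝ, ∀ (α β : Type) [Fintype α] [Fintype β]
    (a : Matrix α β (𝓞 K)) (A : ℝ), a ≠ 0 → 0 < Fintype.card α → Fintype.card α < Fintype.card β →
    (∀ k l, house ((algebraMap (𝓞 K) K) (a k l)) ≤ A) →
    ∃ ξ : β → 𝓞 K, ξ ≠ 0 ∧ a.mulVec ξ = 0 ∧ ∀ l, house ((algebraMap (𝓞 K) K) (ξ l)) ≤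
      c * (c * (Fintype.card β : ℕ) * A) ^
        (((Fintype.card α : ℕ) : ℝ) / ((Fintype.card β : ℕ) - (Fintype.card α : ℕ))) := by
  classical
  exact ⟨_, fun α β _ _ a A h0 h1 h2 h3 =>
    NumberField.house.exists_ne_zero_int_vec_house_le K a h0 h1 h2 rfl h3 rfl⟩

lemma siegel (K : Type) [Field K] [NumberField K] : ∃ c : ℝ, 1 ≤ c ∧ ∀ (α β : Type) [Fintype α] [Fintype β]
    (a : Matrix α β (𝓞 K)) (A : ℝ), 1 ≤ A → 0 < Fintype.card α → 2 * Fintype.card α ≤ Fintype.card β →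
    (∀ k l (ψ : K →+* ℂ), ‖ψ ((algebraMap (𝓞 K) K) (a k l))‖ ≤ A) →
    ∃ ξ : β → 𝓞 K, ξ ≠ 0 ∧ a.mulVec ξ = 0 ∧ ∀ l (ψ : K →+* ℂ), ‖ψ ((algebraMap (𝓞 K) K) (ξ l))‖ ≤
      c * (c * (Fintype.card β : ℕ) * A) := by
  classical
  obtain ⟨c, hc⟩ := siegel0 K
  refine ⟨max 1 |c|, le_max_left _ _, fun α β _ _ a A hA h1 h2 h3 => ?_⟩
  have hb1 : (1 : ℝ) ≤ Fintype.card β := by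
    have : 1 ≤ Fintype.card β := by omega
    exact_mod_cast this
  have hC : (1 : ℝ) ≤ max 1 |c| := le_max_left _ _
  have hbig : 1 ≤ max 1 |c| * (Fintype.card β : ℕ) * A := by
    have : (1 : ℝ) * 1 * 1 ≤ max 1 |c| * (Fintype.card β : ℕ) * A := by gcongr
    linarith
  by_cases ha : a = 0
  · have : Nonempty β := Fintype.card_pos_iff.1 (by omega)
    refine ⟨fun _ => 1, ?_, ?_, ?_⟩
    · intro h
      have := congrFun h (Classical.arbitrary β)
      simp at this
    · rw [ha]; simp
    · intro l ψ
      simp only [map_one, norm_one]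
      calc (1 : ℝ) = 1 * 1 := by ring
        _ ≤ _ := by gcongr
  · obtain ⟨ξ, h4, h5, h6⟩ := hc α β a A ha h1 (by omega) (fun k l => (house_le_iff _ _).2 (h3 k l))
    refine ⟨ξ, h4, h5, fun l ψ => ((house_le_iff _ _).1 (h6 l) ψ).trans ?_⟩
    set e : ℝ := ((Fintype.card α : ℕ) : ℝ) / ((Fintype.card β : ℕ) - (Fintype.card α : ℕ)) with he
    have h2' : (2 : ℝ) * Fintype.card α ≤ Fintype.card β := by exact_mod_cast h2
    have h1' : (0 : ℝ) < Fintype.card α := by exact_mod_cast h1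
    have he1 : e ≤ 1 := by
      rw [he, div_le_one (by linarith)]; linarith
    have he0 : 0 ≤ e := by
      rw [he]; exact div_nonneg h1'.le (by linarith)
    calc _ ≤ |c * (c * (Fintype.card β : ℕ) * A) ^ e| := le_abs_self _
      _ ≤ |c| * |c * (Fintype.card β : ℕ) * A| ^ e := by
          rw [abs_mul]; gcongr; exact Real.abs_rpow_le_abs_rpow _ _
      _ ≤ max 1 |c| * (max 1 |c| * (Fintype.card β : ℕ) * A) ^ e := by
          rw [abs_mul, abs_mul, Nat.abs_cast, abs_of_nonneg (by linarith : (0 : ℝ) ≤ A)]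
          gcongr
          · exact le_max_right _ _
          · exact le_max_right _ _
      _ ≤ max 1 |c| * (max 1 |c| * (Fintype.card β : ℕ) * A) ^ (1 : ℝ) := by
          gcongr
      _ = _ := by rw [Real.rpow_one]

lemma liouville {K : Type} [Field K] [NumberField K] (a : 𝓞 K) (ha : a ≠ 0) (φ : K →+* ℂ) (H : ℝ)
    (hH1 : 1 ≤ H) (hH : ∀ ψ : K →+* ℂ, ‖ψ (algebraMap (𝓞 K) K a)‖ ≤ H) :
    1 ≤ ‖φ (algebraMap (𝓞 K) K a)‖ * H ^ (Module.finrank ℚ K) := by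
  classical
  have h1 : (1 : ℝ) ≤ ∏ σ : K →ₐ[ℚ] ℂ, ‖σ (algebraMap (𝓞 K) K a)‖ := by
    rw [← norm_prod, ← Algebra.norm_eq_prod_embeddings ℚ ℂ, ← Algebra.coe_norm_int]
    simp only [map_intCast, Complex.norm_intCast]
    have : Algebra.norm ℤ a ≠ 0 := Algebra.norm_ne_zero_iff.2 ha
    exact_mod_cast Int.one_le_abs this
  have hc : Fintype.card (K →ₐ[ℚ] ℂ) = Module.finrank ℚ K := AlgHom.card ℚ K ℂ
  let φ' : K →ₐ[ℚ] ℂ := φ.toRatAlgHom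
  rw [← Finset.mul_prod_erase _ _ (Finset.mem_univ φ')] at h1
  refine h1.trans ?_
  have h2 : ∏ σ ∈ Finset.univ.erase φ', ‖σ (algebraMap (𝓞 K) K a)‖ ≤ H ^ (Module.finrank ℚ K) := by
    calc _ ≤ ∏ σ ∈ Finset.univ.erase φ', H :=
          Finset.prod_le_prod (fun _ _ => norm_nonneg _) (fun σ _ => hH (σ : K →+* ℂ))
      _ ≤ _ := by
          rw [Finset.prod_const, ← hc]
          exact pow_le_pow_right₀ hH1 (Finset.card_le_univ _)
  exact mul_le_mul_of_nonneg_left h2 (norm_nonneg _)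

end BK


namespace BK
open Polynomial NumberField

lemma exists_list {τ : Type} [Fintype τ] [DecidableEq τ] (t : τ → ℕ) :
    ∃ l : List τ, (∀ σ, l.count σ = t σ) ∧ l.length = ∑ σ, t σ := by
  refine ⟨(∑ σ, Multiset.replicate (t σ) σ).toList, fun σ => ?_, ?_⟩
  · rw [← Multiset.coe_count, Multiset.coe_toList, Multiset.count_sum']
    simp [Multiset.count_replicate]
  · rw [Multiset.length_toList, Multiset.card_sum]
    simp

/-- The abstract configuration. -/
structure Dat (K : Type) [Field K] [NumberField K] (ι τ : Type) [Fintype ι] [Fintype τ] where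
  φ : K →+* ℂ
  x : ι → τ → 𝓞 K
  m : τ → 𝓞 K
  κ : ι → 𝓞 K
  y : ι → τ → ℂ
  c : τ → ι → ℂ
  hcy : ∀ σ (g : τ → ℂ), ∑ j, c σ j * ∑ σ', y j σ' * g σ' = g σ
  δ : ℕ
  hδ : 1 ≤ δ
  E : ι → ι → 𝓞 K
  hE : ∀ i j, φ (E i j) = δ * Complex.exp (∑ σ, y j σ * φ (x i σ))
  hκ : ∀ j, φ (κ j) = ∑ σ, y j σ * φ (m σ)
  v : τ → ℂ
  hv : ∑ σ, v σ * φ (m σ) ≠ 0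
  hvi : ∀ b b' : ι → ℕ, ∑ i, (b i : ℂ) * ∑ σ, v σ * φ (x i σ) =
    ∑ i, (b' i : ℂ) * ∑ σ, v σ * φ (x i σ) → b = b'

namespace Dat
variable {K : Type} [Field K] [NumberField K] {ι τ : Type} [Fintype ι] [DecidableEq ι] [Fintype τ] (D : Dat K ι τ) (N S : ℕ)

/-- frequencies in algebraic directions -/
noncomputable def wf (σ : τ) (b : ι → Fin N) : 𝓞 K := ∑ i, ((b i : ℕ) : 𝓞 K) * D.x i σ

/-- the algebraic value of the linear form at an integral point -/
noncomputable def r (s : ι → ℕ) : 𝓞 K := ∑ j, ((s j : ℕ) : 𝓞 K) * D.κ j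

/-- scaled exponentials at integral points -/
noncomputable def e (s : ι → ℕ) (b : ι → Fin N) : 𝓞 K :=
  ∏ i, ∏ j, (D.E i j ^ ((b i : ℕ) * s j) * (D.δ : 𝓞 K) ^ (N * S - (b i : ℕ) * s j))

/-- algebraic derivations -/
noncomputable def A : τ → ((ι → Fin N) → (𝓞 K)[X]) →ₗ[𝓞 K] ((ι → Fin N) → (𝓞 K)[X]) :=
  fun σ => Dop (D.wf N σ) (D.m σ)

/-- scaled value -/
noncomputable def Val (s : ι → ℕ) : ((ι → Fin N) → (𝓞 K)[X]) →ₗ[𝓞 K] 𝓞 K := Ev (D.r s) (D.e N S s)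

/-- basic bound hypothesis -/
structure IsBd (c0 : ℝ) : Prop where
  one_le : 1 ≤ c0
  x : ∀ (ψ : K →+* ℂ) i σ, ‖ψ (D.x i σ)‖ ≤ c0
  m : ∀ (ψ : K →+* ℂ) σ, ‖ψ (D.m σ)‖ ≤ c0
  κ : ∀ (ψ : K →+* ℂ) j, ‖ψ (D.κ j)‖ ≤ c0
  E : ∀ (ψ : K →+* ℂ) i j, ‖ψ (D.E i j)‖ ≤ c0
  δ : (D.δ : ℝ) ≤ c0
  L : ∀ i j, ‖∑ σ, D.y j σ * D.φ (D.x i σ)‖ ≤ c0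
  c : ∀ σ, ∑ j, ‖D.c σ j‖ ≤ c0
  y : ∀ j, ∑ σ, ‖D.y j σ‖ ≤ c0

lemma exists_isBd : ∃ c0, D.IsBd c0 := by
  classical
  have hx : ∀ t : 𝓞 K, ∀ ψ : K →+* ℂ, ‖ψ t‖ ≤ house (t : K) := fun t => (house_le_iff _ _).1 le_rfl
  have hn : ∀ t : 𝓞 K, 0 ≤ house (t : K) := fun t => house_nonneg _
  let a1 := ∑ i, ∑ σ, house (D.x i σ : K)
  let a2 := ∑ σ, house (D.m σ : K)
  let a3 := ∑ j, house (D.κ j : K)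
  let a4 := ∑ i, ∑ j, house (D.E i j : K)
  let a5 := ∑ i, ∑ j, ‖∑ σ, D.y j σ * D.φ (D.x i σ)‖
  let a6 := ∑ σ, ∑ j, ‖D.c σ j‖
  let a7 := ∑ j, ∑ σ, ‖D.y j σ‖
  have h1 : 0 ≤ a1 := Finset.sum_nonneg fun i _ => Finset.sum_nonneg fun j _ => hn _
  have h2 : 0 ≤ a2 := Finset.sum_nonneg fun i _ => hn _
  have h3 : 0 ≤ a3 := Finset.sum_nonneg fun i _ => hn _
  have h4 : 0 ≤ a4 := Finset.sum_nonneg fun i _ => Finset.sum_nonneg fun j _ => hn _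
  have h5 : 0 ≤ a5 := Finset.sum_nonneg fun i _ => Finset.sum_nonneg fun j _ => norm_nonneg _
  have h6 : 0 ≤ a6 := Finset.sum_nonneg fun i _ => Finset.sum_nonneg fun j _ => norm_nonneg _
  have h7 : 0 ≤ a7 := Finset.sum_nonneg fun i _ => Finset.sum_nonneg fun j _ => norm_nonneg _
  have h8 : (0 : ℝ) ≤ D.δ := Nat.cast_nonneg _
  refine ⟨1 + a1 + a2 + a3 + a4 + a5 + a6 + a7 + D.δ, by linarith, ?_, ?_, ?_, ?_, by linarith, ?_, ?_, ?_⟩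
  · intro ψ i σ
    have : house (D.x i σ : K) ≤ a1 :=
      (Finset.single_le_sum (f := fun σ => house (D.x i σ : K)) (fun _ _ => hn _) (Finset.mem_univ σ)).trans
       (Finset.single_le_sum (f := fun i => ∑ σ, house (D.x i σ : K))
        (fun _ _ => Finset.sum_nonneg fun _ _ => hn _) (Finset.mem_univ i))
    linarith [hx (D.x i σ) ψ]
  · intro ψ σ
    have : house (D.m σ : K) ≤ a2 :=
      (Finset.single_le_sum (f := fun σ => house (D.m σ : K)) (fun _ _ => hn _) (Finset.mem_univ σ))
    linarith [hx (D.m σ) ψ]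
  · intro ψ σ
    have : house (D.κ σ : K) ≤ a3 :=
      (Finset.single_le_sum (f := fun σ => house (D.κ σ : K)) (fun _ _ => hn _) (Finset.mem_univ σ))
    linarith [hx (D.κ σ) ψ]
  · intro ψ i σ
    have : house (D.E i σ : K) ≤ a4 :=
      (Finset.single_le_sum (f := fun σ => house (D.E i σ : K)) (fun _ _ => hn _) (Finset.mem_univ σ)).trans
       (Finset.single_le_sum (f := fun i => ∑ σ, house (D.E i σ : K))
        (fun _ _ => Finset.sum_nonneg fun _ _ => hn _) (Finset.mem_univ i))
    linarith [hx (D.E i σ) ψ]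
  · intro i j
    have : ‖∑ σ, D.y j σ * D.φ (D.x i σ)‖ ≤ a5 :=
      (Finset.single_le_sum (f := fun j => ‖∑ σ, D.y j σ * D.φ (D.x i σ)‖)
        (fun _ _ => norm_nonneg _) (Finset.mem_univ j)).trans
       (Finset.single_le_sum (f := fun i => ∑ j, ‖∑ σ, D.y j σ * D.φ (D.x i σ)‖)
        (fun _ _ => Finset.sum_nonneg fun _ _ => norm_nonneg _) (Finset.mem_univ i))
    linarith
  · intro σ
    have : ∑ j, ‖D.c σ j‖ ≤ a6 :=
       (Finset.single_le_sum (f := fun i => ∑ j, ‖D.c i j‖)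
        (fun _ _ => Finset.sum_nonneg fun _ _ => norm_nonneg _) (Finset.mem_univ σ))
    linarith
  · intro σ
    have : ∑ j, ‖D.y σ j‖ ≤ a7 :=
       (Finset.single_le_sum (f := fun i => ∑ j, ‖D.y i j‖)
        (fun _ _ => Finset.sum_nonneg fun _ _ => norm_nonneg _) (Finset.mem_univ σ))
    linarith

variable {D N S}

/-- the general size bound -/
noncomputable def Hb (d N S n : ℕ) (c0 M : ℝ) : ℝ :=
  (N : ℝ) ^ d * (N * ((d * N * c0 + c0 * N) ^ n * M) * (d * S * c0) ^ N * c0 ^ (d * d * (N * S)))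

lemma wf_bound {c0 : ℝ} (h : D.IsBd c0) (ψ : K →+* ℂ) (σ : τ) (b : ι → Fin N) :
    ‖ψ (D.wf N σ b)‖ ≤ Fintype.card ι * N * c0 := by
  have h0 := h.one_le
  simp only [wf, map_sum, map_mul, map_natCast]
  calc _ ≤ ∑ i : ι, (N : ℝ) * c0 := by
        refine norm_sum_le_of_le _ fun i _ => ?_
        rw [norm_mul, Complex.norm_natCast]
        gcongr
        · exact (b i).2.le
        · exact h.x ψ i σ
    _ = _ := by simp [mul_assoc]

lemma r_bound {c0 : ℝ} (h : D.IsBd c0) (ψ : K →+* ℂ) (s : ι → ℕ) (hs : ∀ j, s j < S) :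
    ‖ψ (D.r s)‖ ≤ Fintype.card ι * S * c0 := by
  have h0 := h.one_le
  simp only [r, map_sum, map_mul, map_natCast]
  calc _ ≤ ∑ i : ι, (S : ℝ) * c0 := by
        refine norm_sum_le_of_le _ fun i _ => ?_
        rw [norm_mul, Complex.norm_natCast]
        gcongr
        · exact (hs i).le
        · exact h.κ ψ i
    _ = _ := by simp [mul_assoc]

lemma e_bound {c0 : ℝ} (h : D.IsBd c0) (ψ : K →+* ℂ) (s : ι → ℕ) (hs : ∀ j, s j < S) (b : ι → Fin N) :
    ‖ψ (D.e N S s b)‖ ≤ c0 ^ (Fintype.card ι * Fintype.card ι * (N * S)) := by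
  have h0 := h.one_le
  simp only [e, map_prod, map_mul, map_pow, map_natCast, norm_prod, norm_mul, norm_pow, Complex.norm_natCast]
  calc _ ≤ ∏ i : ι, ∏ j : ι, c0 ^ (N * S) := by
        refine Finset.prod_le_prod (fun _ _ => by positivity) fun i _ => ?_
        refine Finset.prod_le_prod (fun _ _ => by positivity) fun j _ => ?_
        have hle : (b i : ℕ) * s j ≤ N * S := Nat.mul_le_mul (b i).2.le (hs j).le
        calc _ ≤ c0 ^ ((b i : ℕ) * s j) * c0 ^ (N * S - (b i : ℕ) * s j) := by
              gcongr
              · exact h.E ψ i j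
              · exact h.δ
          _ = _ := by rw [← pow_add, Nat.add_sub_cancel' hle]
    _ = _ := by simp [← pow_mul]; ring_nf

lemma val_bound {c0 : ℝ} (h : D.IsBd c0) (hS : 1 ≤ S) (hd : 1 ≤ Fintype.card ι) (ψ : K →+* ℂ) {M : ℝ} (hM : 0 ≤ M)
    (q : (ι → Fin N) → (𝓞 K)[X])
    (hq : ∀ b, Bd N M ((q b).map (ψ.comp (algebraMap (𝓞 K) K))))
    (s : ι → ℕ) (hs : ∀ j, s j < S) (l : List τ) :
    ‖ψ (D.Val N S s (Dl (D.A N) l q))‖ ≤ Hb (Fintype.card ι) N S l.length c0 M := by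
  have h0 := h.one_le
  classical
  change ‖(ψ.comp (algebraMap (𝓞 K) K)) (D.Val N S s (Dl (D.A N) l q))‖ ≤ _
  unfold Val A
  rw [map_Ev, map_Dl]
  have hb := Bd.list (A := N) (M := M) (W := Fintype.card ι * N * c0) (m' := c0)
    (q := fun b => (q b).map (ψ.comp (algebraMap (𝓞 K) K)))
    (w := fun σ b => (ψ.comp (algebraMap (𝓞 K) K)) (D.wf N σ b))
    (m := fun σ => (ψ.comp (algebraMap (𝓞 K) K)) (D.m σ))
    (fun σ b => wf_bound h ψ σ b) (fun σ => h.m ψ σ) hM (by positivity) (by positivity) hq l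
  refine (Ev_bound hb (ρ := Fintype.card ι * S * c0) ?_ (r_bound h ψ s hs)
    (fun b => e_bound h ψ s hs b) (by positivity)).trans ?_
  · have hS' : (1 : ℝ) ≤ S := by exact_mod_cast hS
    have hd' : (1 : ℝ) ≤ Fintype.card ι := by exact_mod_cast hd
    have : (1 : ℝ) * 1 * 1 ≤ Fintype.card ι * S * c0 := by gcongr
    linarith
  · unfold Hb; simp

lemma one_le_Hb {d N S n : ℕ} {c0 M : ℝ} (hd : 1 ≤ d) (hN : 1 ≤ N) (hS : 1 ≤ S) (hc : 1 ≤ c0) (hM : 1 ≤ M) :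
    1 ≤ Hb d N S n c0 M := by
  unfold Hb
  have hS' : (1 : ℝ) ≤ S := by exact_mod_cast hS
  have hd' : (1 : ℝ) ≤ d := by exact_mod_cast hd
  have hN' : (1 : ℝ) ≤ N := by exact_mod_cast hN
  have h1 : (1 : ℝ) ≤ d * N * c0 + c0 * N := by
    have : (1 : ℝ) * 1 * 1 + 1 * 1 ≤ d * N * c0 + c0 * N := by gcongr
    linarith
  have h2 : (1 : ℝ) ≤ d * S * c0 := by
    have : (1 : ℝ) * 1 * 1 ≤ d * S * c0 := by gcongr
    linarith
  have h3 := one_le_pow₀ h1 (n := n)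
  have h4 := one_le_pow₀ h2 (n := N)
  have h5 := one_le_pow₀ hc (n := d * d * (N * S))
  have h6 := one_le_pow₀ hN' (n := d)
  have : (1 : ℝ) * (1 * (1 * 1) * 1 * 1) ≤ (N : ℝ) ^ d * (N * ((d * N * c0 + c0 * N) ^ n * M) * (d * S * c0) ^ N * c0 ^ (d * d * (N * S))) := by
    gcongr
  linarith

lemma Hb_mono {d N S n n' : ℕ} {c0 M : ℝ} (hd : 1 ≤ d) (hN : 1 ≤ N) (hc : 1 ≤ c0) (hM : 0 ≤ M)
    (hn : n ≤ n') : Hb d N S n c0 M ≤ Hb d N S n' c0 M := by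
  unfold Hb
  have hd' : (1 : ℝ) ≤ d := by exact_mod_cast hd
  have hN' : (1 : ℝ) ≤ N := by exact_mod_cast hN
  have h1 : (1 : ℝ) ≤ d * N * c0 + c0 * N := by
    have : (1 : ℝ) * 1 * 1 + 1 * 1 ≤ d * N * c0 + c0 * N := by gcongr
    linarith
  gcongr

lemma A_comm (σ σ' : τ) (p : (ι → Fin N) → (𝓞 K)[X]) :
    D.A N σ (D.A N σ' p) = D.A N σ' (D.A N σ p) := Dop_comm _ _ _ _ _

/-- Construction of the auxiliary function. -/
lemma exists_aux (D : Dat K ι τ) {c1 : ℝ}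
    (hsieg : ∀ (α β : Type) [Fintype α] [Fintype β]
    (a : Matrix α β (𝓞 K)) (A : ℝ), 1 ≤ A → 0 < Fintype.card α → 2 * Fintype.card α ≤ Fintype.card β →
    (∀ k l (ψ : K →+* ℂ), ‖ψ ((algebraMap (𝓞 K) K) (a k l))‖ ≤ A) →
    ∃ ξ : β → 𝓞 K, ξ ≠ 0 ∧ a.mulVec ξ = 0 ∧ ∀ l (ψ : K →+* ℂ), ‖ψ ((algebraMap (𝓞 K) K) (ξ l))‖ ≤
      c1 * (c1 * (Fintype.card β : ℕ) * A))
    {c0 : ℝ} (h : D.IsBd c0) {d : ℕ} (hd : 1 ≤ d) (hι : Fintype.card ι = d) (hτ : Fintype.card τ = d)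
    {N S T : ℕ} (hN : 1 ≤ N) (hS : 1 ≤ S) (hT : 1 ≤ T) (hcard : 2 * (S ^ d * T ^ d) ≤ N ^ d * N) :
    ∃ q : (ι → Fin N) → (𝓞 K)[X], q ≠ 0 ∧
      (∀ (ψ : K →+* ℂ) b, Bd N (c1 * (c1 * ((N : ℝ) ^ d * N) * Hb d N S (d * T) c0 1))
        ((q b).map (ψ.comp (algebraMap (𝓞 K) K)))) ∧
      ∀ s : ι → ℕ, (∀ j, s j < S) → ∀ l : List τ, l.length < T → D.Val N S s (Dl (D.A N) l q) = 0 := by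
  classical
  choose lst hl1 hl2 using exists_list (τ := τ)
  let mon : (ι → Fin N) × Fin N → ((ι → Fin N) → (𝓞 K)[X]) := fun p => Pi.single p.1 (X ^ (p.2 : ℕ))
  let a : Matrix ((ι → Fin S) × (τ → Fin T)) ((ι → Fin N) × Fin N) (𝓞 K) := fun k p =>
    D.Val N S (fun j => (k.1 j : ℕ)) (Dl (D.A N) (lst fun σ => (k.2 σ : ℕ)) (mon p))
  have hmon : ∀ (ψ : K →+* ℂ) p b, Bd N 1 ((mon p b).map (ψ.comp (algebraMap (𝓞 K) K))) := by
    intro ψ p b t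
    simp only [mon]
    by_cases hb : b = p.1
    · subst hb
      simp only [Pi.single_eq_same, Polynomial.map_pow, map_X, coeff_X_pow]
      constructor
      · split_ifs <;> simp
      · intro ht
        rw [if_neg]
        have := p.2.2
        omega
    · simp [Pi.single_eq_of_ne hb]
  have hone : 1 ≤ Hb d N S (d * T) c0 1 := one_le_Hb hd hN hS h.one_le le_rfl
  obtain ⟨ξ, hξ0, hξ1, hξ2⟩ := hsieg _ _ a (Hb d N S (d * T) c0 1) hone
    (by simp only [Fintype.card_prod, Fintype.card_fun, Fintype.card_fin]; positivity)
    (by simpa [hι, hτ] using hcard)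
    (by
      intro k p ψ
      refine (val_bound h hS (by omega) ψ zero_le_one (mon p) (hmon ψ p) _ (fun j => (k.1 j).2) _).trans ?_
      rw [hι]
      refine Hb_mono hd hN h.one_le zero_le_one ?_
      rw [hl2]
      calc _ ≤ ∑ σ : τ, T := Finset.sum_le_sum fun σ _ => (k.2 σ).2.le
        _ = d * T := by simp [hτ])
  let q : (ι → Fin N) → (𝓞 K)[X] := fun b => ∑ t : Fin N, C (ξ (b, t)) * X ^ (t : ℕ)
  have hqc : ∀ b t, (q b).coeff t = if ht : t < N then ξ (b, ⟨t, ht⟩) else 0 := by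
    intro b t
    simp only [q, finsetSum_coeff, coeff_C_mul, coeff_X_pow]
    split_ifs with ht
    · rw [Finset.sum_eq_single ⟨t, ht⟩]
      · simp
      · intro t' _ hne
        rw [if_neg, mul_zero]
        intro h; exact hne (Fin.ext h.symm)
      · simp
    · refine Finset.sum_eq_zero fun t' _ => ?_
      rw [if_neg, mul_zero]
      have := t'.2
      omega
  have hqsum : q = ∑ p, ξ p • mon p := by
    funext b
    simp only [q, mon, Finset.sum_apply, Pi.smul_apply, Fintype.sum_prod_type, smul_eq_C_mul]
    rw [Finset.sum_eq_single b]
    · simp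
    · intro b' _ hne
      simp [Pi.single_eq_of_ne hne.symm]
    · simp
  refine ⟨q, ?_, ?_, ?_⟩
  · intro hq
    apply hξ0
    funext p
    have := hqc p.1 p.2
    rw [hq, dif_pos p.2.2] at this
    simpa using this.symm
  · intro ψ b t
    rw [coeff_map, hqc]
    split_ifs with ht
    · refine ⟨?_, fun h => absurd ht (by omega)⟩
      have := hξ2 (b, ⟨t, ht⟩) ψ
      simpa [hι] using this
    · refine ⟨?_, fun _ => by simp⟩
      have := (norm_nonneg _).trans (hξ2 (b, ⟨0, hN⟩) ψ)
      simpa [hι] using this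
  · intro s hs l hl
    have hcnt : ∀ σ, l.count σ < T := fun σ => List.count_le_length.trans_lt hl
    have hperm : l.Perm (lst fun σ => l.count σ) := by
      rw [List.perm_iff_count]; intro σ; rw [hl1]
    rw [Dl_perm _ A_comm hperm, hqsum, map_sum, map_sum]
    have := congrFun hξ1 (fun j => ⟨s j, hs j⟩, fun σ => ⟨l.count σ, hcnt σ⟩)
    rw [Matrix.mulVec, dotProduct, Pi.zero_apply] at this
    rw [← this]
    refine Finset.sum_congr rfl fun p _ => ?_
    rw [map_smul, map_smul, smul_eq_mul, mul_comm]

end Dat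
end BK


namespace BK
open Polynomial NumberField

lemma sum_update {ι : Type} [Fintype ι] [DecidableEq ι] (s : ι → ℕ) (j : ι) (t : ℕ) (f : ι → ℂ) :
    ∑ j', ((Function.update s j t j' : ℕ) : ℂ) * f j' =
      ∑ j', ((Function.update s j 0 j' : ℕ) : ℂ) * f j' + t * f j := by
  rw [← Finset.add_sum_erase _ _ (Finset.mem_univ j), ← Finset.add_sum_erase Finset.univ
    (fun j' => ((Function.update s j 0 j' : ℕ) : ℂ) * f j') (Finset.mem_univ j)]
  simp only [Function.update_self, Nat.cast_zero, zero_mul, zero_add]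
  rw [add_comm]
  congr 1
  refine Finset.sum_congr rfl fun i hi => ?_
  rw [Function.update_of_ne (Finset.ne_of_mem_erase hi), Function.update_of_ne (Finset.ne_of_mem_erase hi)]

lemma pigeon {ι : Type} [Fintype ι] [DecidableEq ι] (l : List ι) (k0 : ℕ)
    (h : Fintype.card ι * (k0 - 1) < l.length) :
    ∃ j r, l.Perm (r ++ List.replicate k0 j) := by
  have hlen : l.length = ∑ j, l.count j := by
    have := Multiset.toFinset_sum_count_eq (l : Multiset ι)
    rw [Multiset.coe_card] at this
    rw [← this]
    simp only [Multiset.coe_count]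
    refine Finset.sum_subset (Finset.subset_univ _) fun j _ hj => ?_
    simpa [List.count_eq_zero] using hj
  obtain ⟨j, hj⟩ : ∃ j, k0 ≤ l.count j := by
    by_contra! hc
    have : ∑ j, l.count j ≤ ∑ j : ι, (k0 - 1) := Finset.sum_le_sum fun j _ => by have := hc j; omega
    simp at this
    omega
  obtain ⟨r, hr⟩ := (List.replicate_sublist_iff.2 hj).exists_perm_append
  exact ⟨j, r, hr.trans List.perm_append_comm⟩

namespace Dat
variable {K : Type} [Field K] [NumberField K] {ι τ : Type} [Fintype ι] [DecidableEq ι] [Fintype τ]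
  (D : Dat K ι τ) (N S : ℕ)

/-- the embedding on integers -/
noncomputable def φ0 : 𝓞 K →+* ℂ := D.φ.comp (algebraMap (𝓞 K) K)

/-- frequencies along the point directions -/
noncomputable def we (j : ι) (b : ι → Fin N) : ℂ := ∑ σ, D.y j σ * D.φ0 (D.wf N σ b)

/-- point derivations -/
noncomputable def Ae : ι → ((ι → Fin N) → ℂ[X]) →ₗ[ℂ] ((ι → Fin N) → ℂ[X]) :=
  fun j => Dop (D.we N j) (D.φ0 (D.κ j))

/-- algebraic derivations over the complex numbers -/
noncomputable def Af : τ → ((ι → Fin N) → ℂ[X]) →ₗ[ℂ] ((ι → Fin N) → ℂ[X]) :=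
  fun σ => Dop (fun b => D.φ0 (D.wf N σ b)) (D.φ0 (D.m σ))

/-- complex evaluation -/
noncomputable def EvC (s : ι → ℕ) : ((ι → Fin N) → ℂ[X]) →ₗ[ℂ] ℂ :=
  Ev (∑ j, (s j : ℂ) * D.φ0 (D.κ j)) (fun b => Complex.exp (∑ j, (s j : ℂ) * D.we N j b))

lemma Ae_eq (j : ι) (p) : D.Ae N j p = ∑ σ, D.y j σ • D.Af N σ p := by
  have h := Dop_sum (fun σ b => D.φ0 (D.wf N σ b)) (fun σ => D.φ0 (D.m σ)) (D.y j) p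
  unfold Ae Af
  rw [← h, show D.φ0 (D.κ j) = _ from D.hκ j]
  rfl

lemma Af_eq (σ : τ) (p) : D.Af N σ p = ∑ j, D.c σ j • D.Ae N j p := by
  have h := Dop_sum (fun j b => D.we N j b) (fun j => D.φ0 (D.κ j)) (D.c σ) p
  unfold Ae Af
  rw [← h]
  congr 2
  · funext b
    exact (D.hcy σ (fun σ => D.φ0 (D.wf N σ b))).symm
  · rw [← D.hcy σ (fun σ => D.φ0 (D.m σ))]
    refine Finset.sum_congr rfl fun j _ => ?_
    rw [show D.φ0 (D.κ j) = _ from D.hκ j]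
    rfl

lemma we_eq (j : ι) (b : ι → Fin N) :
    D.we N j b = ∑ i, ((b i : ℕ) : ℂ) * ∑ σ, D.y j σ * D.φ (D.x i σ) := by
  simp only [we, wf, map_sum, map_mul, map_natCast, Finset.mul_sum]
  rw [Finset.sum_comm]
  refine Finset.sum_congr rfl fun i _ => Finset.sum_congr rfl fun σ _ => ?_
  rw [show D.φ0 (D.x i σ) = D.φ (D.x i σ) from rfl]
  ring

lemma φ_e (s : ι → ℕ) (hs : ∀ j, s j < S) (b : ι → Fin N) :
    D.φ0 (D.e N S s b) = (D.δ : ℂ) ^ (Fintype.card ι * Fintype.card ι * (N * S)) *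
      Complex.exp (∑ j, (s j : ℂ) * D.we N j b) := by
  have h1 : ∀ i j, D.φ0 (D.E i j ^ ((b i : ℕ) * s j) * (D.δ : 𝓞 K) ^ (N * S - (b i : ℕ) * s j)) =
      (D.δ : ℂ) ^ (N * S) * Complex.exp ((s j : ℂ) * (((b i : ℕ) : ℂ) * ∑ σ, D.y j σ * D.φ (D.x i σ))) := by
    intro i j
    have hle : (b i : ℕ) * s j ≤ N * S := Nat.mul_le_mul (b i).2.le (hs j).le
    rw [map_mul, map_pow, map_pow, map_natCast, show D.φ0 (D.E i j) = _ from D.hE i j, mul_pow,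
      ← Complex.exp_nat_mul, mul_right_comm, ← pow_add, Nat.add_sub_cancel' hle]
    push_cast
    congr 2
    ring
  simp only [e, map_prod]
  rw [Finset.prod_congr rfl fun i _ => Finset.prod_congr rfl fun j _ => h1 i j]
  simp only [Finset.prod_mul_distrib, ← Complex.exp_sum]
  congr 1
  · simp [← pow_mul]; ring_nf
  · simp only [we_eq, Finset.mul_sum]
    rw [Finset.sum_comm]

lemma φ_Val (s : ι → ℕ) (hs : ∀ j, s j < S) (l : List τ) (q : (ι → Fin N) → (𝓞 K)[X]) :
    D.φ (D.Val N S s (Dl (D.A N) l q)) = (D.δ : ℂ) ^ (Fintype.card ι * Fintype.card ι * (N * S)) *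
      D.EvC N s (Dl (D.Af N) l (fun b => (q b).map D.φ0)) := by
  change D.φ0 (D.Val N S s (Dl (D.A N) l q)) = _
  unfold Val A EvC Af
  rw [map_Ev, map_Dl]
  simp only [D.φ_e N S s hs, Ev_apply, Finset.mul_sum]
  refine Finset.sum_congr rfl fun b _ => ?_
  rw [r, map_sum]
  simp only [map_mul, map_natCast]
  ring

variable {D N S}

lemma we_bound {c0 : ℝ} (h : D.IsBd c0) (j : ι) (b : ι → Fin N) :
    ‖D.we N j b‖ ≤ Fintype.card ι * N * c0 := by
  have h0 := h.one_le
  rw [we_eq]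
  calc _ ≤ ∑ i : ι, (N : ℝ) * c0 := by
        refine norm_sum_le_of_le _ fun i _ => ?_
        rw [norm_mul, Complex.norm_natCast]
        gcongr
        · exact (b i).2.le
        · exact h.L i j
    _ = _ := by simp [mul_assoc]

lemma upper {c0 : ℝ} (h : D.IsBd c0) {d : ℕ} (hd : 1 ≤ d) (hι : Fintype.card ι = d)
    (hS : 1 ≤ S) {Q : ℝ} (hQ : 0 ≤ Q)
    (q : (ι → Fin N) → (𝓞 K)[X]) (hq : ∀ b, Bd N Q ((q b).map D.φ0))
    (n k0 : ℕ) (hk0 : d * (k0 - 1) < n) (hk1 : 1 ≤ k0)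
    (hvan : ∀ s : ι → ℕ, (∀ j, s j < S) → ∀ l : List τ, l.length < n → D.Val N S s (Dl (D.A N) l q) = 0)
    (R : ℝ) (hR : 2 * (S : ℝ) + 2 ≤ R)
    (s0 : ι → ℕ) (hs0 : ∀ j, s0 j < S) (l : List τ) (hl : l.length = n) :
    ‖D.φ (D.Val N S s0 (Dl (D.A N) l q))‖ ≤ c0 ^ (d * d * (N * S)) * (c0 ^ n * (k0.factorial *
      ((2 * ((S : ℝ) + 1)) ^ (S * k0) * ((N : ℝ) ^ d * (N * ((d * N * c0 + c0 * N) ^ (n - k0) * Q) *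
        (d * S * c0 + R * c0) ^ N * Real.exp (d * S * (d * N * c0) + R * (d * N * c0)))) / R ^ (S * k0)))) := by
  have h0 := h.one_le
  have hS' : (1 : ℝ) ≤ S := by exact_mod_cast hS
  have hd' : (1 : ℝ) ≤ d := by exact_mod_cast hd
  have hR0 : 0 < R := by linarith
  set p : (ι → Fin N) → ℂ[X] := fun b => (q b).map D.φ0 with hp
  have hδ0 : (D.δ : ℂ) ≠ 0 := by have := D.hδ; exact_mod_cast (by omega : D.δ ≠ 0)
  -- vanishing for point derivations
  have hvan' : ∀ s : ι → ℕ, (∀ j, s j < S) → ∀ l : List ι, l.length < n → D.EvC N s (Dl (D.Ae N) l p) = 0 := by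
    intro s hs l hl
    have := transfer (D.Af N) (D.Ae N) D.y (fun j p => D.Ae_eq N j p) c0 h.y (by linarith) (D.EvC N s) 0 le_rfl
      l.length p (by
        intro l' hl'
        have h1 := D.φ_Val N S s hs l' q
        rw [hvan s hs l' (by omega)] at h1
        simp only [map_zero] at h1
        have h2 := (mul_eq_zero.1 h1.symm).resolve_left (pow_ne_zero _ hδ0)
        rw [h2]; simp) l rfl
    simpa using this
  rw [D.φ_Val N S s0 hs0, norm_mul, norm_pow, Complex.norm_natCast, hι]
  refine mul_le_mul (pow_le_pow_left₀ (Nat.cast_nonneg _) h.δ _) ?_ (norm_nonneg _) (by positivity)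
  refine transfer (D.Ae N) (D.Af N) D.c (fun j p => D.Af_eq N j p) c0 h.c (by linarith) (D.EvC N s0) _ ?_
      n p ?_ l hl
  · positivity
  intro l hl
  obtain ⟨j, r, hr⟩ := pigeon l k0 (by rw [hι, hl]; exact hk0)
  have hlen : n = r.length + k0 := by rw [← hl, hr.length_eq]; simp
  have hcomm : ∀ i j p, D.Ae N i (D.Ae N j p) = D.Ae N j (D.Ae N i p) := fun i j p => Dop_comm _ _ _ _ _
  rw [Dl_perm _ hcomm hr, Dl_append, Dl_replicate]
  -- line parametrisation
  have hpt : ∀ (t : ℕ) (g : (ι → Fin N) → ℂ[X]), D.EvC N (Function.update s0 j t) g =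
      Ev ((∑ j', ((Function.update s0 j 0 j' : ℕ) : ℂ) * D.φ0 (D.κ j')) + (t : ℂ) * D.φ0 (D.κ j))
        (fun b => Complex.exp ((∑ j', ((Function.update s0 j 0 j' : ℕ) : ℂ) * D.we N j' b)
          + (t : ℂ) * D.we N j b)) g := by
    intro t g
    unfold EvC
    rw [sum_update s0 j t]
    congr 2
    funext b
    rw [sum_update s0 j t]
  have hbox : ∀ t < S, ∀ j', Function.update s0 j t j' < S := by
    intro t ht j'
    by_cases hj : j' = j
    · subst hj; simpa using ht
    · rw [Function.update_of_ne hj]; exact hs0 j'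
  have hb := Bd.list (A := N) (M := Q) (W := d * N * c0) (m' := c0) (q := p)
    (w := D.we N) (m := fun j => D.φ0 (D.κ j))
    (fun j b => hι ▸ we_bound h j b) (fun j => h.κ D.φ j) hQ (by positivity) (by positivity) hq r
  have hb2 := line_bound (D.we N j) (D.φ0 (D.κ j))
    (∑ j', ((Function.update s0 j 0 j' : ℕ) : ℂ) * D.φ0 (D.κ j'))
    (fun b => ∑ j', ((Function.update s0 j 0 j' : ℕ) : ℂ) * D.we N j' b) (Dl (D.Ae N) r p)
    (A := N) (M := (d * N * c0 + c0 * N) ^ r.length * Q) (ρ := d * S * c0 + R * c0)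
    (Θ := d * S * (d * N * c0) + R * (d * N * c0)) hb (by positivity) S k0 R hR ?_ ?_ ?_ ?_ (s0 j) (hs0 j)
  · rw [← hpt, Function.update_eq_self] at hb2
    refine hb2.trans (le_of_eq ?_)
    rw [hlen, Nat.add_sub_cancel]
    simp [hι]
  · have : (1 : ℝ) * 1 * 1 + 0 ≤ d * S * c0 + R * c0 := by gcongr; positivity
    linarith
  · have h1 := r_bound h D.φ (Function.update s0 j 0) (hbox 0 (by omega))
    rw [hι] at h1
    have h2 : D.φ (D.r (Function.update s0 j 0)) = ∑ j', ((Function.update s0 j 0 j' : ℕ) : ℂ) * D.φ0 (D.κ j') := by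
      change D.φ0 _ = _
      rw [Dat.r, map_sum]; simp only [map_mul, map_natCast]
    rw [h2] at h1
    gcongr
    exact h.κ D.φ j
  · intro b
    have h1 : ‖∑ j', ((Function.update s0 j 0 j' : ℕ) : ℂ) * D.we N j' b‖ ≤ ∑ j' : ι, (S : ℝ) * (d * N * c0) := by
      refine norm_sum_le_of_le _ fun i _ => ?_
      rw [norm_mul, Complex.norm_natCast]
      gcongr
      · exact (hbox 0 (by omega) i).le
      · exact hι ▸ we_bound h i b
    simp only [Finset.sum_const, Finset.card_univ, hι, nsmul_eq_mul] at h1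
    rw [← mul_assoc] at h1
    gcongr
    exact hι ▸ we_bound h j b
  · intro t ht i hi
    rw [← hpt]
    have := hvan' (Function.update s0 j t) (hbox t ht) (r ++ List.replicate i j) (by simp; omega)
    rw [Dl_append, Dl_replicate] at this
    exact this

/-- Nonvanishing of some derivative. -/
lemma exists_nonvan (hS : 1 ≤ S) (q : (ι → Fin N) → (𝓞 K)[X]) (hq : q ≠ 0) :
    ∃ (n : ℕ) (s : ι → ℕ) (l : List τ), (∀ j, s j < S) ∧ l.length = n ∧ D.Val N S s (Dl (D.A N) l q) ≠ 0 := by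
  by_contra! hc
  apply hq
  have hinj : Function.Injective D.φ0 := D.φ.injective.comp (FaithfulSMul.algebraMap_injective (𝓞 K) K)
  have hδ0 : (D.δ : ℂ) ≠ 0 := by have := D.hδ; exact_mod_cast (by omega : D.δ ≠ 0)
  have hs0 : ∀ j : ι, (fun _ : ι => 0) j < S := fun j => by show 0 < S; omega
  have hz : (fun b => (q b).map D.φ0) = 0 := by
    refine nonvanish (fun b => ∑ σ, D.v σ * D.φ0 (D.wf N σ b)) ?_ (∑ σ, D.v σ * D.φ0 (D.m σ)) D.hv
      (∑ j : ι, (((fun _ : ι => 0) j : ℕ) : ℂ) * D.φ0 (D.κ j))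
      (fun b => Complex.exp (∑ j, (((fun _ : ι => 0) j : ℕ) : ℂ) * D.we N j b))
      (fun b => Complex.exp_ne_zero _) _ _ le_rfl ?_
    · intro b b' hbb
      have hw : ∀ b : ι → Fin N, ∑ σ, D.v σ * D.φ0 (D.wf N σ b) =
          ∑ i, ((b i : ℕ) : ℂ) * ∑ σ, D.v σ * D.φ (D.x i σ) := by
        intro b
        simp only [wf, map_sum, map_mul, map_natCast, Finset.mul_sum]
        rw [Finset.sum_comm]
        refine Finset.sum_congr rfl fun i _ => Finset.sum_congr rfl fun σ _ => ?_
        rw [show D.φ0 (D.x i σ) = D.φ (D.x i σ) from rfl]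
        ring
      simp only [hw] at hbb
      have := D.hvi (fun i => (b i : ℕ)) (fun i => (b' i : ℕ)) hbb
      funext i
      exact Fin.ext (congrFun this i)
    · intro n
      have := transfer (D.Af N) (fun _ : Unit => Dop (fun b => ∑ σ, D.v σ * D.φ0 (D.wf N σ b)) (∑ σ, D.v σ * D.φ0 (D.m σ)))
        (fun _ => D.v) (fun _ p => Dop_sum _ _ _ p) (∑ σ, ‖D.v σ‖) (fun _ => le_rfl)
        (Finset.sum_nonneg fun _ _ => norm_nonneg _) (D.EvC N (fun _ => 0)) 0 le_rfl n
        (fun b => (q b).map D.φ0) (by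
          intro l' hl'
          have h1 := D.φ_Val N S _ hs0 l' q
          rw [hc n _ l' hs0 hl'] at h1
          simp only [map_zero] at h1
          have h2 := (mul_eq_zero.1 h1.symm).resolve_left (pow_ne_zero _ hδ0)
          rw [h2]; simp) (List.replicate n ()) (by simp)
      rw [Dl_replicate] at this
      have h3 := norm_le_zero_iff.1 (by simpa only [mul_zero] using this)
      exact h3
  funext b
  exact Polynomial.map_injective _ hinj (by simpa using congrFun hz b)

end Dat
end BK


namespace BK
open Polynomial NumberField

lemma natcast_le_two_pow (N : ℕ) : (N : ℝ) ≤ 2 ^ N := by exact_mod_cast (Nat.lt_two_pow_self (n := N)).le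

lemma pow_le_of_le {a : ℝ} (ha : 1 ≤ a) {N G n : ℕ} (h : N ≤ G * n) : a ^ N ≤ (a ^ G) ^ n := by
  rw [← pow_mul]; exact pow_le_pow_right₀ ha h

lemma NdN_le {d N G n : ℕ} (h : N ≤ G * n) : (N : ℝ) ^ d * N ≤ ((2 ^ (d + 1)) ^ G) ^ n := by
  calc (N : ℝ) ^ d * N = (N : ℝ) ^ (d + 1) := by rw [pow_succ]
    _ ≤ (2 ^ N) ^ (d + 1) := by gcongr; exact natcast_le_two_pow N
    _ = (2 ^ (d + 1)) ^ N := by rw [← pow_mul, ← pow_mul, mul_comm]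
    _ ≤ _ := pow_le_of_le (one_le_pow₀ (by norm_num)) h

/-- constant in the size bound -/
noncomputable def C3 (d S G : ℕ) (c0 : ℝ) : ℝ :=
  (2 ^ (d + 1)) ^ G * (d * S * c0) ^ G * (c0 ^ (d * d * S)) ^ G

lemma one_le_dS {d S : ℕ} {c0 : ℝ} (hd : 1 ≤ d) (hS : 1 ≤ S) (hc : 1 ≤ c0) : (1 : ℝ) ≤ d * S * c0 := by
  have hS' : (1 : ℝ) ≤ S := by exact_mod_cast hS
  have hd' : (1 : ℝ) ≤ d := by exact_mod_cast hd
  have : (1 : ℝ) * 1 * 1 ≤ d * S * c0 := by gcongr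
  linarith

lemma one_le_C3 {d S G : ℕ} {c0 : ℝ} (hd : 1 ≤ d) (hS : 1 ≤ S) (hc : 1 ≤ c0) : 1 ≤ C3 d S G c0 := by
  unfold C3
  have h1 : (1 : ℝ) ≤ (2 ^ (d + 1)) ^ G := one_le_pow₀ (one_le_pow₀ (by norm_num))
  have h2 : (1 : ℝ) ≤ (d * S * c0) ^ G := one_le_pow₀ (one_le_dS hd hS hc)
  have h3 : (1 : ℝ) ≤ (c0 ^ (d * d * S)) ^ G := one_le_pow₀ (one_le_pow₀ hc)
  have : (1 : ℝ) * 1 * 1 ≤ (2 ^ (d + 1)) ^ G * (d * S * c0) ^ G * (c0 ^ (d * d * S)) ^ G := by gcongr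
  linarith

lemma base_le {d N G n : ℕ} {c0 : ℝ} (hc : 1 ≤ c0) (h : N ≤ G * n) :
    d * N * c0 + c0 * N ≤ (d + 1) * c0 * G * n := by
  have h' : (N : ℝ) ≤ G * n := by exact_mod_cast h
  calc d * N * c0 + c0 * N = (d + 1) * c0 * N := by ring
    _ ≤ (d + 1) * c0 * (G * n) := by gcongr
    _ = _ := by ring

lemma cpow_le {d N S G n : ℕ} {c0 : ℝ} (hc : 1 ≤ c0) (h : N ≤ G * n) :
    c0 ^ (d * d * (N * S)) ≤ ((c0 ^ (d * d * S)) ^ G) ^ n := by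
  calc c0 ^ (d * d * (N * S)) = (c0 ^ (d * d * S)) ^ N := by rw [← pow_mul]; ring_nf
    _ ≤ _ := pow_le_of_le (one_le_pow₀ hc) h

lemma Hb_le {d N S G n t : ℕ} {c0 M : ℝ} (hd : 1 ≤ d) (hS : 1 ≤ S) (hc : 1 ≤ c0) (hM : 0 ≤ M)
    (h : N ≤ G * n) : Dat.Hb d N S t c0 M ≤ C3 d S G c0 ^ n * ((d + 1) * c0 * G * n) ^ t * M := by
  unfold Dat.Hb C3
  calc _ = ((N : ℝ) ^ d * N) * (d * S * c0) ^ N * c0 ^ (d * d * (N * S)) * (d * N * c0 + c0 * N) ^ t * M := by ring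
    _ ≤ ((2 ^ (d + 1)) ^ G) ^ n * ((d * S * c0) ^ G) ^ n * ((c0 ^ (d * d * S)) ^ G) ^ n *
        ((d + 1) * c0 * G * n) ^ t * M := by
        gcongr
        · exact NdN_le h
        · exact pow_le_of_le (one_le_dS hd hS hc) h
        · exact cpow_le hc h
        · exact base_le hc h
    _ = _ := by simp only [mul_pow _ _ n]

/-- the upper estimate, cleaned up -/
lemma upper_le {d N S G n k0 : ℕ} {c0 R Q : ℝ} (hd : 1 ≤ d) (hS : 1 ≤ S) (hc : 1 ≤ c0) (hQ : 0 ≤ Q)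
    (hG : 1 ≤ G) (hn : 1 ≤ n)
    (h : N ≤ G * n) (hk : k0 ≤ n) (hR : 1 ≤ R) (hRN : R * N = G * n) :
    c0 ^ (d * d * (N * S)) * (c0 ^ n * (k0.factorial *
      ((2 * ((S : ℝ) + 1)) ^ (S * k0) * ((N : ℝ) ^ d * (N * ((d * N * c0 + c0 * N) ^ (n - k0) * Q) *
        (d * S * c0 + R * c0) ^ N * Real.exp (d * S * (d * N * c0) + R * (d * N * c0)))) / R ^ (S * k0)))) ≤
    (((c0 ^ (d * d * S)) ^ G * c0 * (2 * ((S : ℝ) + 1)) ^ S * (2 ^ (d + 1)) ^ G * ((d * S + 1) * c0) ^ G *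
      Real.exp (G + d * S * (d * G * c0) + d * G * c0)) ^ n * ((d + 1) * c0 * G * n) ^ (2 * n) * Q) / R ^ (S * k0) := by
  have hd' : (1 : ℝ) ≤ d := by exact_mod_cast hd
  have hS' : (1 : ℝ) ≤ S := by exact_mod_cast hS
  have hG' : (1 : ℝ) ≤ G := by exact_mod_cast hG
  have hn' : (1 : ℝ) ≤ n := by exact_mod_cast hn
  have hN' : (N : ℝ) ≤ G * n := by exact_mod_cast h
  have hC1 : (1 : ℝ) ≤ (d + 1) * c0 * G := by
    have : ((0 : ℝ) + 1) * 1 * 1 ≤ (d + 1) * c0 * G := by gcongr; linarith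
    linarith
  have hn1 : (n : ℝ) ≤ (d + 1) * c0 * G * n := by
    have : (1 : ℝ) * n ≤ (d + 1) * c0 * G * n := by gcongr
    linarith
  have hfac : (k0.factorial : ℝ) ≤ ((d + 1) * c0 * G * n) ^ n := by
    calc (k0.factorial : ℝ) ≤ (n : ℝ) ^ k0 := by
          have := (Nat.factorial_le_pow k0).trans (Nat.pow_le_pow_left hk k0)
          exact_mod_cast this
      _ ≤ (n : ℝ) ^ n := pow_le_pow_right₀ hn' hk
      _ ≤ _ := by gcongr
  have h1 : (2 * ((S : ℝ) + 1)) ^ (S * k0) ≤ ((2 * ((S : ℝ) + 1)) ^ S) ^ n := by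
    rw [← pow_mul]
    exact pow_le_pow_right₀ (by linarith) (Nat.mul_le_mul_left _ hk)
  have h2 : (d * N * c0 + c0 * N) ^ (n - k0) ≤ ((d + 1) * c0 * G * n) ^ n := by
    calc _ ≤ ((d + 1) * c0 * G * n) ^ (n - k0) := by gcongr; exact base_le hc h
      _ ≤ _ := pow_le_pow_right₀ (by linarith) (Nat.sub_le _ _)
  have hRexp : R ^ N ≤ Real.exp (G * n) := by
    calc R ^ N ≤ (Real.exp R) ^ N := by
          gcongr
          linarith [Real.add_one_le_exp R]
      _ = Real.exp (G * n) := by rw [← Real.exp_nat_mul, ← hRN, mul_comm]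
  have hdS1 : (1 : ℝ) ≤ (d * S + 1) * c0 := by
    have : ((0 : ℝ) + 1) * 1 ≤ (d * S + 1) * c0 := by gcongr; positivity
    linarith
  have h3 : (d * S * c0 + R * c0) ^ N ≤ (((d * S + 1) * c0) ^ G) ^ n * Real.exp (G * n) := by
    calc (d * S * c0 + R * c0) ^ N ≤ (d * S * c0 * R + R * c0) ^ N := by
          refine pow_le_pow_left₀ (by positivity) ?_ _
          have : d * S * c0 * 1 ≤ d * S * c0 * R := by gcongr
          linarith
      _ = ((d * S + 1) * c0) ^ N * R ^ N := by rw [← mul_pow]; ring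
      _ ≤ _ := by
          gcongr
          exact pow_le_of_le hdS1 h
  have h4 : Real.exp (d * S * (d * N * c0) + R * (d * N * c0)) ≤
      Real.exp ((d * S * (d * G * c0) + d * G * c0) * n) := by
    apply Real.exp_le_exp.2
    have e1 : R * (d * N * c0) = d * G * c0 * n := by
      calc R * (d * N * c0) = d * c0 * (R * N) := by ring
        _ = _ := by rw [hRN]; ring
    rw [e1]
    have : d * S * (d * N * c0) ≤ d * S * (d * (G * n) * c0) := by gcongr
    linarith
  have hexp : Real.exp (G + d * S * (d * G * c0) + d * G * c0) ^ n =
      Real.exp (G * n) * Real.exp ((d * S * (d * G * c0) + d * G * c0) * n) := by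
    rw [← Real.exp_nat_mul, ← Real.exp_add]; congr 1; ring
  rw [← mul_div_assoc, ← mul_div_assoc, ← mul_div_assoc]
  gcongr ?_ / _
  calc _ = c0 ^ (d * d * (N * S)) * c0 ^ n * (2 * ((S : ℝ) + 1)) ^ (S * k0) * ((N : ℝ) ^ d * N) *
        (d * S * c0 + R * c0) ^ N * Real.exp (d * S * (d * N * c0) + R * (d * N * c0)) *
        (k0.factorial * (d * N * c0 + c0 * N) ^ (n - k0)) * Q := by ring
    _ ≤ ((c0 ^ (d * d * S)) ^ G) ^ n * c0 ^ n * ((2 * ((S : ℝ) + 1)) ^ S) ^ n * ((2 ^ (d + 1)) ^ G) ^ n *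
        ((((d * S + 1) * c0) ^ G) ^ n * Real.exp (G * n)) *
        Real.exp ((d * S * (d * G * c0) + d * G * c0) * n) *
        (((d + 1) * c0 * G * n) ^ n * ((d + 1) * c0 * G * n) ^ n) * Q := by
        gcongr
        · exact cpow_le hc h
        · exact NdN_le h
    _ = _ := by
        rw [mul_pow (_ * _) (Real.exp _) n, hexp, ← pow_add, ← two_mul]
        simp only [mul_pow _ _ n]
        ring

/-- final comparison -/
lemma final_cmp {d S n k0 e : ℕ} {R C : ℝ} (hn : 1 ≤ n) (hR : 1 ≤ R) (hC : 0 ≤ C)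
    (hRn : (n : ℝ) ≤ R ^ (d + 1)) (hk0 : n ≤ d * k0) (hS : e * (d * (d + 1)) + 1 ≤ S)
    (h : R ^ (S * k0) ≤ (C * n ^ e) ^ n) : (n : ℝ) ≤ C ^ (d * (d + 1)) := by
  have hn' : (1 : ℝ) ≤ n := by exact_mod_cast hn
  have h1 : ((n : ℝ) ^ S) ^ n ≤ ((C * n ^ e) ^ (d * (d + 1))) ^ n := by
    calc ((n : ℝ) ^ S) ^ n = (n : ℝ) ^ (S * n) := by rw [← pow_mul]
      _ ≤ (n : ℝ) ^ (S * (d * k0)) := pow_le_pow_right₀ hn' (Nat.mul_le_mul_left _ hk0)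
      _ ≤ (R ^ (d + 1)) ^ (S * (d * k0)) := by gcongr
      _ = (R ^ (S * k0)) ^ (d * (d + 1)) := by rw [← pow_mul, ← pow_mul]; ring_nf
      _ ≤ ((C * n ^ e) ^ n) ^ (d * (d + 1)) := by gcongr
      _ = _ := by rw [← pow_mul, ← pow_mul, mul_comm n]
  have h2 : (n : ℝ) ^ S ≤ (C * n ^ e) ^ (d * (d + 1)) :=
    le_of_pow_le_pow_left₀ (by omega) (by positivity) h1
  have h3 : (n : ℝ) ^ (e * (d * (d + 1)) + 1) ≤ (C * n ^ e) ^ (d * (d + 1)) :=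
    (pow_le_pow_right₀ hn' hS).trans h2
  rw [pow_succ, mul_pow, ← pow_mul, mul_comm] at h3
  exact le_of_mul_le_mul_right h3 (by positivity)

theorem Dat.false_of {K : Type} [Field K] [NumberField K] {ι τ : Type} [Fintype ι] [DecidableEq ι] [Fintype τ]
    (D : Dat K ι τ) {d : ℕ} (hd : 1 ≤ d) (hι : Fintype.card ι = d) (hτ : Fintype.card τ = d) : False := by
  classical
  obtain ⟨c0, h⟩ := D.exists_isBd
  obtain ⟨c1, hc1, hsieg⟩ := siegel K
  have hc := h.one_le
  obtain ⟨hh, hhh⟩ : ∃ hh, hh = Module.finrank ℚ K := ⟨_, rfl⟩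
  obtain ⟨e, he⟩ : ∃ e, e = d + 2 + (d + 1) * hh := ⟨_, rfl⟩
  obtain ⟨g, hg⟩ : ∃ g, g = e * (d * (d + 1)) + 1 := ⟨_, rfl⟩
  have hg1 : 1 ≤ g := by omega
  obtain ⟨S, hSd⟩ : ∃ S, S = g ^ (d + 1) := ⟨_, rfl⟩
  have hSg : g ≤ S := by rw [hSd]; exact Nat.le_self_pow (by omega) g
  have hS : 1 ≤ S := by omega
  obtain ⟨G, hGd⟩ : ∃ G, G = 2 * g ^ d := ⟨_, rfl⟩
  have hG : 1 ≤ G := by rw [hGd]; have := Nat.pow_pos (n := d) hg1; omega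
  have hd' : (1 : ℝ) ≤ d := by exact_mod_cast hd
  have hG' : (1 : ℝ) ≤ G := by exact_mod_cast hG
  have hS' : (1 : ℝ) ≤ S := by exact_mod_cast hS
  obtain ⟨C1, hC1d⟩ : ∃ C1 : ℝ, C1 = (d + 1) * c0 * G := ⟨_, rfl⟩
  have hC1 : 1 ≤ C1 := by
    have : ((0 : ℝ) + 1) * 1 * 1 ≤ (d + 1) * c0 * G := by gcongr; linarith
    linarith
  obtain ⟨c3, hc3d⟩ : ∃ c3, c3 = C3 d S G c0 := ⟨_, rfl⟩
  have hc3 : 1 ≤ c3 := by rw [hc3d]; exact one_le_C3 hd hS hc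
  obtain ⟨C2, hC2d⟩ : ∃ C2 : ℝ, C2 = (2 ^ (d + 1)) ^ G := ⟨_, rfl⟩
  have hC2 : 1 ≤ C2 := by rw [hC2d]; exact one_le_pow₀ (one_le_pow₀ (by norm_num))
  obtain ⟨C5, hC5d⟩ : ∃ C5 : ℝ, C5 = (c0 ^ (d * d * S)) ^ G * c0 * (2 * ((S : ℝ) + 1)) ^ S * (2 ^ (d + 1)) ^ G *
      ((d * S + 1) * c0) ^ G * Real.exp (G + d * S * (d * G * c0) + d * G * c0) := ⟨_, rfl⟩
  have hC5 : 0 ≤ C5 := by rw [hC5d]; positivity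
  obtain ⟨C4, hC4d⟩ : ∃ C4 : ℝ, C4 = c1 * c1 * C2 * c3 := ⟨_, rfl⟩
  have hC4 : 0 ≤ C4 := by rw [hC4d]; positivity
  obtain ⟨C, hCd⟩ : ∃ C : ℝ, C = C5 * C4 * C1 ^ (d + 2) * (c3 * C4 * C1 ^ (d + 1)) ^ hh := ⟨_, rfl⟩
  have hC : 0 ≤ C := by rw [hCd]; positivity
  obtain ⟨k, hk⟩ := exists_nat_gt (max (2 * (S : ℝ) + 2) (C ^ (d * (d + 1))))
  have hkS : 2 * (S : ℝ) + 2 < k := (le_max_left _ _).trans_lt hk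
  have hkC : C ^ (d * (d + 1)) < k := (le_max_right _ _).trans_lt hk
  have hk1 : 1 ≤ k := by
    have : (1 : ℝ) ≤ k := by linarith
    exact_mod_cast this
  have hkd : 1 ≤ k ^ d := Nat.pow_pos hk1
  obtain ⟨T, hTd⟩ : ∃ T, T = k ^ (d + 1) := ⟨_, rfl⟩
  have hT : 1 ≤ T := by rw [hTd]; exact Nat.pow_pos hk1
  obtain ⟨N, hNd⟩ : ∃ N, N = G * k ^ d := ⟨_, rfl⟩
  have hN : 1 ≤ N := by rw [hNd]; exact Nat.mul_pos hG hkd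
  have hcard : 2 * (S ^ d * T ^ d) ≤ N ^ d * N := by
    rw [hNd, hGd, hSd, hTd]
    have e1 : (2 * g ^ d * k ^ d) ^ d * (2 * g ^ d * k ^ d) = 2 ^ d * (2 * ((g ^ (d + 1)) ^ d * (k ^ (d + 1)) ^ d)) := by
      ring
    rw [e1]
    exact Nat.le_mul_of_pos_left _ (by positivity)
  obtain ⟨q, hq0, hqb, hqv⟩ := D.exists_aux hsieg h hd hι hτ hN hS hT hcard
  obtain ⟨Q, hQd⟩ : ∃ Q, Q = c1 * (c1 * ((N : ℝ) ^ d * N) * Dat.Hb d N S (d * T) c0 1) := ⟨_, rfl⟩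
  rw [← hQd] at hqb
  have hN' : (1 : ℝ) ≤ N := by exact_mod_cast hN
  have hQ1 : 1 ≤ Q := by
    have h1 := Dat.one_le_Hb (n := d * T) hd hN hS hc (le_refl (1 : ℝ))
    have h2 : (1 : ℝ) ≤ (N : ℝ) ^ d * N := by
      rw [← pow_succ]; exact one_le_pow₀ hN'
    rw [hQd]
    have : (1 : ℝ) * (1 * 1 * 1) ≤ c1 * (c1 * ((N : ℝ) ^ d * N) * Dat.Hb d N S (d * T) c0 1) := by gcongr
    linarith
  have hex := Dat.exists_nonvan (D := D) hS q hq0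
  obtain ⟨s, l, hs, hl, hne⟩ := Nat.find_spec hex
  obtain ⟨n, hnd⟩ : ∃ n, n = Nat.find hex := ⟨_, rfl⟩
  have hmin : ∀ s : ι → ℕ, (∀ j, s j < S) → ∀ l : List τ, l.length < n → D.Val N S s (Dl (D.A N) l q) = 0 := by
    intro s hs l hl
    by_contra hne
    rw [hnd] at hl
    exact Nat.find_min hex hl ⟨s, l, hs, rfl, hne⟩
  rw [← hnd] at hl
  have hTn : T ≤ n := by
    by_contra hc
    exact hne (hqv s hs l (by omega))
  have hn : 1 ≤ n := by omega
  have hn' : (1 : ℝ) ≤ n := by exact_mod_cast hn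
  have hkn : k ^ d ≤ n := by
    have : k ^ d ≤ k ^ (d + 1) := Nat.pow_le_pow_right hk1 (by omega)
    omega
  have hkkn : k * k ^ d ≤ n := by rw [← pow_succ']; omega
  have hNn : N ≤ G * n := by rw [hNd]; exact Nat.mul_le_mul_left _ hkn
  have hkd0 : (0 : ℝ) < (k : ℝ) ^ d := by positivity
  obtain ⟨R, hRd⟩ : ∃ R : ℝ, R = n / (k : ℝ) ^ d := ⟨_, rfl⟩
  have hRk : (k : ℝ) ≤ R := by
    rw [hRd, le_div_iff₀ hkd0]; exact_mod_cast hkkn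
  have hRS : 2 * (S : ℝ) + 2 ≤ R := by linarith
  have hR1 : 1 ≤ R := by linarith
  have hRN : R * N = G * n := by
    rw [hRd, hNd]; push_cast; field_simp
  have hRn : (n : ℝ) ≤ R ^ (d + 1) := by
    rw [hRd, div_pow, le_div_iff₀ (by positivity), pow_succ' (n : ℝ)]
    gcongr
    rw [← pow_mul, mul_comm, pow_mul]
    gcongr
    have : k ^ (d + 1) ≤ n := by omega
    exact_mod_cast this
  -- the order of the pure derivative
  obtain ⟨k0, hk0d⟩ : ∃ k0, k0 = (n - 1) / d + 1 := ⟨_, rfl⟩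
  have hdiv := Nat.div_add_mod (n - 1) d
  have hmod := Nat.mod_lt (n - 1) (by omega : d > 0)
  have hk0a : d * (k0 - 1) < n := by
    rw [hk0d, Nat.add_sub_cancel]; omega
  have hk0b : n ≤ d * k0 := by
    rw [hk0d, Nat.mul_add]; omega
  have hk0c : k0 ≤ n := by
    have : (n - 1) / d ≤ n - 1 := Nat.div_le_self _ _
    omega
  have hQ : Q ≤ C4 ^ n * (C1 * n) ^ (d * n) := by
    have h1 := Hb_le (t := d * T) hd hS hc zero_le_one hNn
    rw [← hc3d, ← hC1d, mul_one] at h1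
    have h2 : (C1 * n) ^ (d * T) ≤ (C1 * n) ^ (d * n) := by
      apply pow_le_pow_right₀
      · have : (1 : ℝ) * 1 ≤ C1 * n := by gcongr
        linarith
      · exact Nat.mul_le_mul_left _ hTn
    have h3 := NdN_le (d := d) hNn
    rw [← hC2d] at h3
    have h4 : c1 * c1 ≤ (c1 * c1) ^ n := le_self_pow₀ (by nlinarith) (by omega)
    calc Q = (c1 * c1) * ((N : ℝ) ^ d * N) * Dat.Hb d N S (d * T) c0 1 := by rw [hQd]; ring
      _ ≤ (c1 * c1) ^ n * C2 ^ n * (c3 ^ n * (C1 * n) ^ (d * n)) := by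
          have := zero_le_one.trans (Dat.one_le_Hb (n := d * T) hd hN hS hc (le_refl (1 : ℝ)))
          gcongr
          exact h1.trans (by gcongr)
      _ = _ := by rw [hC4d, mul_pow, mul_pow]; ring
  have hH : Dat.Hb d N S n c0 Q ≤ (c3 * C4 * C1 ^ (d + 1) * n ^ (d + 1)) ^ n := by
    have h1 := Hb_le (t := n) hd hS hc (zero_le_one.trans hQ1) hNn
    rw [← hc3d, ← hC1d] at h1
    calc _ ≤ _ := h1
      _ ≤ c3 ^ n * (C1 * n) ^ n * (C4 ^ n * (C1 * n) ^ (d * n)) := by gcongr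
      _ = _ := by
          rw [pow_mul, ← mul_pow, ← mul_pow, ← mul_pow]
          congr 1; ring
  have hU := Dat.upper h hd hι hS (zero_le_one.trans hQ1) q (fun b => hqb D.φ b) n k0 hk0a (by rw [hk0d]; exact Nat.succ_pos _) hmin R hRS
    s hs l hl
  have hU2 := hU.trans (upper_le hd hS hc (zero_le_one.trans hQ1) hG hn hNn hk0c hR1 hRN)
  rw [← hC5d, ← hC1d] at hU2
  have hLi := liouville (D.Val N S s (Dl (D.A N) l q)) hne D.φ (Dat.Hb d N S n c0 Q)
    (Dat.one_le_Hb hd hN hS hc hQ1) (by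
      intro ψ
      have := Dat.val_bound h hS (by omega) ψ (zero_le_one.trans hQ1) q (hqb ψ) s hs l
      rw [hι, hl] at this
      exact this)
  rw [← hhh] at hLi
  have hHb0 : 0 ≤ Dat.Hb d N S n c0 Q := zero_le_one.trans (Dat.one_le_Hb hd hN hS hc hQ1)
  have hRp : 0 < R ^ (S * k0) := by positivity
  have hmain : R ^ (S * k0) ≤ (C * n ^ e) ^ n := by
    have h1 : 1 ≤ (C5 ^ n * (C1 * n) ^ (2 * n) * Q) / R ^ (S * k0) * Dat.Hb d N S n c0 Q ^ hh :=
      hLi.trans (by gcongr)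
    rw [div_mul_eq_mul_div, le_div_iff₀ hRp, one_mul] at h1
    calc _ ≤ _ := h1
      _ ≤ C5 ^ n * (C1 * n) ^ (2 * n) * (C4 ^ n * (C1 * n) ^ (d * n)) *
          ((c3 * C4 * C1 ^ (d + 1) * n ^ (d + 1)) ^ n) ^ hh := by gcongr
      _ = _ := by
          rw [pow_mul, pow_mul, ← pow_mul _ n hh, mul_comm n hh, pow_mul _ hh n, ← mul_pow, ← mul_pow,
            ← mul_pow, ← mul_pow]
          congr 1
          rw [hCd, he, pow_add (n : ℝ) (d + 2), pow_mul (n : ℝ), mul_pow _ _ hh]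
          ring
  have hfin := final_cmp hn hR1 hC hRn hk0b (by rw [← hg]; exact hSg) hmain
  have hkn2 : k ≤ n := (Nat.le_mul_of_pos_right k hkd).trans hkkn
  have hkn3 : (k : ℝ) ≤ n := by exact_mod_cast hkn2
  linarith

end BK


namespace BK
open Polynomial NumberField

lemma trace_lam {K : Type} [Field K] [NumberField K] [IsGalois ℚ K] (φ : K →+* ℂ) {n : ℕ}
    (lam : Fin n → ℂ) (b : Fin n → K) (z : K) :
    ∑ σ : K ≃ₐ[ℚ] K, φ (σ z) * ∑ k, φ (σ (b k)) * lam k =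
      ∑ k, ((Algebra.trace ℚ K (z * b k) : ℚ) : ℂ) * lam k := by
  simp only [Finset.mul_sum]
  rw [Finset.sum_comm]
  refine Finset.sum_congr rfl fun k _ => ?_
  have h := congrArg φ (trace_eq_sum_automorphisms (K := ℚ) (L := K) (z * b k))
  rw [map_sum, eq_ratCast, map_ratCast] at h
  rw [h, Finset.sum_mul]
  refine Finset.sum_congr rfl fun σ _ => ?_
  rw [map_mul, map_mul, mul_assoc]

lemma dedekind {K : Type} [Field K] [NumberField K] (φ : K →+* ℂ) (g : (K ≃ₐ[ℚ] K) → ℂ)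
    (h : ∀ j, ∑ σ : K ≃ₐ[ℚ] K, φ (σ (integralBasis K j)) * g σ = 0) : g = 0 := by
  have h1 : ∀ z : K, ∑ σ : K ≃ₐ[ℚ] K, g σ * φ (σ z) = 0 := by
    intro z
    let f : K →+ ℂ := ∑ σ : K ≃ₐ[ℚ] K, (AddMonoidHom.mulLeft (g σ)).comp
      ((φ.comp (σ : K →+* K) : K →+* ℂ) : K →+ ℂ)
    have hf : ∀ z, f z = ∑ σ : K ≃ₐ[ℚ] K, g σ * φ (σ z) := by
      intro z; simp [f]
    have h0 : f.toRatLinearMap = 0 := by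
      refine (integralBasis K).ext fun j => ?_
      change f _ = 0
      rw [hf, ← h j]
      exact Finset.sum_congr rfl fun σ _ => mul_comm _ _
    rw [← hf]
    exact LinearMap.congr_fun h0 z
  have hinj : Function.Injective (fun σ : K ≃ₐ[ℚ] K => ((φ.comp (σ : K →+* K) : K →+* ℂ) : K →* ℂ)) := by
    intro σ σ' hs
    ext z
    have := DFunLike.congr_fun hs z
    exact φ.injective this
  have hli := (linearIndependent_monoidHom K ℂ).comp _ hinj
  rw [Fintype.linearIndependent_iff] at hli
  funext σ
  refine hli g ?_ σ
  funext z
  simpa using h1 z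

lemma basis_inj {K : Type} [Field K] [NumberField K] (ψ : K →+* ℂ) {w : ℂ} (hw : w ≠ 0)
    (b b' : Module.Free.ChooseBasisIndex ℤ (𝓞 K) → ℕ)
    (h : ∑ i, (b i : ℂ) * (ψ (integralBasis K i) * w) = ∑ i, (b' i : ℂ) * (ψ (integralBasis K i) * w)) : b = b' := by
  have h1 : ψ (∑ i, (b i : ℚ) • integralBasis K i) = ψ (∑ i, (b' i : ℚ) • integralBasis K i) := by
    simp only [← mul_assoc, ← Finset.sum_mul] at h
    have := mul_right_cancel₀ hw h
    simpa [map_sum, Algebra.smul_def] using this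
  have h2 := ψ.injective h1
  funext i
  have h3 := congrArg (fun z => (integralBasis K).repr z i) h2
  simp only [Module.Basis.repr_sum_self] at h3
  exact_mod_cast h3

theorem core {K : Type} [Field K] [NumberField K] [IsGalois ℚ K] (φ : K →+* ℂ) {n : ℕ}
    (a : Fin n → K) (lam : Fin n → ℂ) (hexp : ∀ k, Complex.exp (lam k) = φ (a k))
    (hind : LinearIndependent ℚ lam) (b0 : 𝓞 K) (b : Fin n → 𝓞 K)
    (hrel : φ b0 + ∑ k, φ (b k) * lam k = 0) : ∀ k, b k = 0 := by
  classical
  by_contra! hne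
  obtain ⟨kk, hkk⟩ := hne
  let Λ : (K ≃ₐ[ℚ] K) → ℂ := fun σ => ∑ k, φ (σ (b k)) * lam k
  have hΛ1 : Λ 1 = - φ b0 := by
    have : Λ 1 = ∑ k, φ (b k) * lam k := rfl
    rw [this]; linear_combination hrel
  let ε : (K ≃ₐ[ℚ] K) → 𝓞 K := fun σ => if σ = 1 then -b0 else if Λ σ = 0 then 0 else 1
  let μ : (K ≃ₐ[ℚ] K) → ℂ := fun σ => if σ = 1 then 1 else if Λ σ = 0 then 1 else Λ σ
  have hεμ : ∀ σ, φ (ε σ) * μ σ = Λ σ := by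
    intro σ
    simp only [ε, μ]
    split_ifs with h1 h2
    · subst h1; rw [hΛ1]; simp
    · rw [h2]; simp
    · simp
  have hμ : ∀ σ, μ σ ≠ 0 := by
    intro σ
    simp only [μ]
    split_ifs with h1 h2
    · exact one_ne_zero
    · exact one_ne_zero
    · exact h2
  let κ := RingOfIntegers.basis K
  have hκb : ∀ j, (κ j : K) = integralBasis K j := fun j => (integralBasis_apply K j).symm
  let x : Module.Free.ChooseBasisIndex ℤ (𝓞 K) → (K ≃ₐ[ℚ] K) → 𝓞 K :=
    fun i σ => RingOfIntegers.mapRingHom (σ : K →+* K) (κ i) * ε σ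
  have hx : ∀ i σ, φ (x i σ) = φ (σ (κ i)) * φ (ε σ) := by
    intro i σ
    simp only [x, map_mul, RingOfIntegers.mapRingHom_apply]
    rfl
  let m : (K ≃ₐ[ℚ] K) → 𝓞 K := fun σ => if σ = 1 then 1 else 0
  let y : Module.Free.ChooseBasisIndex ℤ (𝓞 K) → (K ≃ₐ[ℚ] K) → ℂ := fun j σ => φ (σ (κ j)) * μ σ
  -- inverse matrix
  let Y : ((K ≃ₐ[ℚ] K) → ℂ) →ₗ[ℂ] (Module.Free.ChooseBasisIndex ℤ (𝓞 K) → ℂ) := Matrix.mulVecLin (Matrix.of y)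
  have hY : ∀ g j, Y g j = ∑ σ, y j σ * g σ := fun g j => rfl
  obtain ⟨L, hL⟩ := Y.exists_leftInverse_of_injective (by
    rw [LinearMap.ker_eq_bot']
    intro g hg
    have := dedekind φ (fun σ => μ σ * g σ) (by
      intro j
      have h1 := congrFun hg j
      rw [hY] at h1
      simp only [y, hκb] at h1
      rw [Pi.zero_apply] at h1
      rw [← h1]
      exact Finset.sum_congr rfl fun σ _ => (mul_assoc _ _ _).symm)
    funext σ
    have h2 := congrFun this σ
    exact (mul_eq_zero.1 h2).resolve_left (hμ σ))
  let c : (K ≃ₐ[ℚ] K) → Module.Free.ChooseBasisIndex ℤ (𝓞 K) → ℂ := fun σ j => L (Pi.single j 1) σ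
  have hcy : ∀ σ (g : (K ≃ₐ[ℚ] K) → ℂ), ∑ j, c σ j * ∑ σ', y j σ' * g σ' = g σ := by
    intro σ g
    have h1 := congrFun (LinearMap.congr_fun hL g) σ
    rw [LinearMap.comp_apply, LinearMap.id_apply] at h1
    rw [← h1]
    conv_rhs => rw [LinearMap.pi_apply_eq_sum_univ L (Y g)]
    rw [Finset.sum_apply]
    refine Finset.sum_congr rfl fun j _ => ?_
    rw [Pi.smul_apply, smul_eq_mul, hY, mul_comm]
    simp only [c]
    have h3 : (Pi.single j 1 : Module.Free.ChooseBasisIndex ℤ (𝓞 K) → ℂ) = fun i => if j = i then 1 else 0 := by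
      funext i
      simp [Pi.single_apply, eq_comm]
    rw [h3]
  -- exponentials
  have hsum : ∀ i j, ∑ σ, y j σ * φ (x i σ) =
      ∑ k, ((Algebra.trace ℤ (𝓞 K) (κ i * κ j * b k) : ℤ) : ℂ) * lam k := by
    intro i j
    have h1 := trace_lam φ lam (fun k => (b k : K)) ((κ i * κ j : 𝓞 K) : K)
    have h2 : ∀ k, ((Algebra.trace ℚ K (((κ i * κ j : 𝓞 K) : K) * (b k : K)) : ℚ) : ℂ) =
        ((Algebra.trace ℤ (𝓞 K) (κ i * κ j * b k) : ℤ) : ℂ) := by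
      intro k
      rw [← map_mul, ← Algebra.coe_trace_int]
      simp
    simp only [h2] at h1
    rw [← h1]
    refine Finset.sum_congr rfl fun σ _ => ?_
    rw [hx]
    change φ (σ (κ j)) * μ σ * (φ (σ (κ i)) * φ (ε σ)) = φ (σ ((κ i * κ j : 𝓞 K) : K)) * Λ σ
    have h4 : φ (σ ((κ i * κ j : 𝓞 K) : K)) = φ (σ (κ i)) * φ (σ (κ j)) := by
      rw [← map_mul φ, ← map_mul σ]; rfl
    rw [← hεμ, h4]
    ring
  let z : Module.Free.ChooseBasisIndex ℤ (𝓞 K) → Module.Free.ChooseBasisIndex ℤ (𝓞 K) → K :=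
    fun i j => ∏ k, a k ^ (Algebra.trace ℤ (𝓞 K) (κ i * κ j * b k))
  have hz : ∀ i j, φ (z i j) = Complex.exp (∑ σ, y j σ * φ (x i σ)) := by
    intro i j
    rw [hsum, Complex.exp_sum, map_prod]
    refine Finset.prod_congr rfl fun k _ => ?_
    rw [map_zpow₀, ← hexp, Complex.exp_int_mul]
  obtain ⟨δ0, hδ0, hδi⟩ := exists_integral_multiples ℤ ℚ (L := K)
    (Finset.univ.image fun p : Module.Free.ChooseBasisIndex ℤ (𝓞 K) × Module.Free.ChooseBasisIndex ℤ (𝓞 K) => z p.1 p.2)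
  have hint : ∀ i j, IsIntegral ℤ ((δ0.natAbs : K) * z i j) := by
    intro i j
    have h1 := hδi (z i j) (Finset.mem_image.2 ⟨(i, j), Finset.mem_univ _, rfl⟩)
    rw [zsmul_eq_mul] at h1
    rcases Int.natAbs_eq δ0 with h2 | h2
    · rw [h2, Int.cast_natCast] at h1; exact h1
    · rw [h2, Int.cast_neg, Int.cast_natCast] at h1
      have := h1.neg
      rwa [neg_mul, neg_neg] at this
  -- the separating vector
  obtain ⟨v, hv, ψ, w, hw, hvx⟩ : ∃ v : (K ≃ₐ[ℚ] K) → ℂ, ∑ σ, v σ * φ (m σ) ≠ 0 ∧ ∃ (ψ : K →+* ℂ) (w : ℂ),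
      w ≠ 0 ∧ ∀ i, ∑ σ, v σ * φ (x i σ) = ψ (integralBasis K i) * w := by
    by_cases hb0 : b0 = 0
    · obtain ⟨σ0, hσ0⟩ : ∃ σ0, Λ σ0 ≠ 0 := by
        by_contra! hall
        have hb : (b kk : K) ≠ 0 := by simpa using hkk
        have h1 := trace_lam φ lam (fun k => (b k : K)) ((b kk : K)⁻¹)
        have h2 : ∑ σ : K ≃ₐ[ℚ] K, φ (σ ((b kk : K)⁻¹)) * ∑ k, φ (σ (b k)) * lam k = 0 :=
          Finset.sum_eq_zero fun σ _ => by
            have := hall σ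
            simp only [Λ] at this
            rw [this, mul_zero]
        rw [h2] at h1
        rw [Fintype.linearIndependent_iff] at hind
        have h3 := hind (fun k => Algebra.trace ℚ K ((b kk : K)⁻¹ * b k)) (by
          simp only [Algebra.smul_def, eq_ratCast]; exact h1.symm) kk
        simp only [inv_mul_cancel₀ hb] at h3
        have h4 := Algebra.trace_algebraMap (R := ℚ) (S := K) 1
        rw [map_one, h3] at h4
        have h5 : Module.finrank ℚ K ≠ 0 := Module.finrank_pos.ne'
        simp at h4
        exact h5 (by exact_mod_cast h4.symm)
      have hσ1 : σ0 ≠ 1 := by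
        rintro rfl
        rw [hΛ1, hb0] at hσ0
        simp at hσ0
      refine ⟨fun σ => (if σ = σ0 then 1 else 0) + (if σ = 1 then 1 else 0), ?_, φ.comp (σ0 : K →+* K), 1,
        one_ne_zero, fun i => ?_⟩
      · simp [m, hσ1.symm]
      · simp only [add_mul, Finset.sum_add_distrib, ite_mul, one_mul, zero_mul, Finset.sum_ite_eq',
          Finset.mem_univ, if_true, hx, ← hκb]
        simp [ε, hσ1, hσ0, hb0]
    · refine ⟨fun σ => if σ = 1 then 1 else 0, ?_, φ, φ (-b0 : 𝓞 K), ?_, fun i => ?_⟩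
      · simp [m]
      · simpa using hb0
      · simp only [ite_mul, one_mul, zero_mul, Finset.sum_ite_eq',
          Finset.mem_univ, if_true, hx, ← hκb]
        simp [ε]
  let D : Dat K (Module.Free.ChooseBasisIndex ℤ (𝓞 K)) (K ≃ₐ[ℚ] K) :=
    { φ := φ, x := x, m := m, κ := κ, y := y, c := c, hcy := hcy, δ := δ0.natAbs
      hδ := Int.natAbs_pos.2 hδ0
      E := fun i j => ⟨(δ0.natAbs : K) * z i j, hint i j⟩
      hE := fun i j => by
        rw [← hz]
        change φ ((δ0.natAbs : K) * z i j) = _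
        rw [map_mul, map_natCast]
      hκ := fun j => by simp [m, y, μ]
      v := v, hv := hv
      hvi := fun s s' hs => by
        simp only [hvx] at hs
        exact basis_inj ψ hw s s' hs }
  refine D.false_of (d := Module.finrank ℚ K) Module.finrank_pos ?_ ?_
  · rw [← Module.finrank_eq_card_chooseBasisIndex, RingOfIntegers.rank]
  · rw [← Nat.card_eq_fintype_card, IsGalois.card_aut_eq_finrank]

end BK

/-- **Baker's theorem.** Let `λ₁, …, λ_n` be `ℚ`-linearly independent logarithms
of nonzero algebraic numbers `α₁, …, α_n` (i.e. `e^{λ_j} = α_j`). Then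
`1, λ₁, …, λ_n` are linearly independent over the field of algebraic numbers:
if `β₀ + β₁λ₁ + ⋯ + β_nλ_n = 0` with all `β_j` algebraic, then all `β_j = 0`. -/
theorem baker_theorem
    (n : ℕ) (hn : 1 ≤ n)
    (α lam : Fin n → ℂ)
    (hα : ∀ j, α j ≠ 0) (halg : ∀ j, IsAlgebraic ℚ (α j))
    (hexp : ∀ j, Complex.exp (lam j) = α j)
    (hind : LinearIndependent ℚ lam) :
    ∀ (β₀ : ℂ) (β : Fin n → ℂ),
      IsAlgebraic ℚ β₀ → (∀ j, IsAlgebraic ℚ (β j)) →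
      β₀ + ∑ j, β j * lam j = 0 →
      β₀ = 0 ∧ ∀ j, β j = 0 := by
  intro β₀ β hβ₀ hβ hrel
  classical
  let s : Set ℂ := Set.range α ∪ Set.range β ∪ {β₀}
  have hsf : Finite s := by
    have : s.Finite := ((Set.finite_range α).union (Set.finite_range β)).union (Set.finite_singleton _)
    exact this.to_subtype
  let K₀ := IntermediateField.adjoin ℚ s
  have : FiniteDimensional ℚ K₀ := by
    refine IntermediateField.finiteDimensional_adjoin fun t ht => ?_
    rcases ht with (⟨j, rfl⟩ | ⟨j, rfl⟩) | h
    · exact (halg j).isIntegral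
    · exact (hβ j).isIntegral
    · rw [Set.mem_singleton_iff.1 h]; exact hβ₀.isIntegral
  let K := IntermediateField.normalClosure ℚ K₀ ℂ
  have : FiniteDimensional ℚ K := inferInstance
  have : NumberField K := { to_charZero := inferInstance, to_finiteDimensional := inferInstance }
  have hnc : IsNormalClosure ℚ K₀ K :=
    Algebra.IsAlgebraic.isNormalClosure_normalClosure fun x => IsAlgClosed.splits _
  have : Normal ℚ K := IsNormalClosure.normal (K := K₀)
  have : IsGalois ℚ K := { to_isSeparable := inferInstance, to_normal := inferInstance }
  have hmem : ∀ t ∈ s, t ∈ K := fun t ht =>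
    IntermediateField.le_normalClosure K₀ (IntermediateField.subset_adjoin ℚ s ht)
  let φ : K →+* ℂ := algebraMap K ℂ
  let a : Fin n → K := fun j => ⟨α j, hmem _ (Or.inl (Or.inl ⟨j, rfl⟩))⟩
  let b : Fin n → K := fun j => ⟨β j, hmem _ (Or.inl (Or.inr ⟨j, rfl⟩))⟩
  let b0 : K := ⟨β₀, hmem _ (Or.inr rfl)⟩
  obtain ⟨y, hy0, hy⟩ := exists_integral_multiples ℤ ℚ (L := K) (insert b0 (Finset.univ.image b))
  have hyb0 := hy b0 (Finset.mem_insert_self _ _)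
  have hyb : ∀ j, IsIntegral ℤ (y • b j) := fun j =>
    hy (b j) (Finset.mem_insert_of_mem (Finset.mem_image_of_mem _ (Finset.mem_univ j)))
  have hc := BK.core φ a lam hexp hind ⟨y • b0, hyb0⟩ (fun j => ⟨y • b j, hyb j⟩) (by
    change φ (y • b0) + ∑ k, φ (y • b k) * lam k = 0
    simp only [zsmul_eq_mul, map_mul, map_intCast, mul_assoc]
    rw [← Finset.mul_sum, ← mul_add]
    have : φ b0 + ∑ k, φ (b k) * lam k = 0 := hrel
    rw [this, mul_zero])
  have hβ0 : ∀ j, β j = 0 := by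
    intro j
    have h1 : y • b j = 0 := congrArg (fun t : NumberField.RingOfIntegers K => (t : K)) (hc j)
    have h2 := (smul_eq_zero.1 h1).resolve_left hy0
    exact congrArg (fun t : K => (t : ℂ)) h2
  refine ⟨?_, hβ0⟩
  simpa [hβ0] using hrel
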